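/- arXiv:0801.2856 — 2 statements merged into one kernel-verified Lean document; each statement's English description precedes it below -/
import Mathlib

section
/- Let Γ be a completed primitive simple graph with vertex set V of cardinality ℓ+2 ≥ 5. For distinct vertices u, w, z ∈ V and a unit vector e ∈ ℝ⁴, consider the affine position-space integral I(u,w,z,e) = ∫ ∏_{{i,j} edge of Γ with u ∉ {i,j}} ‖x_i − x_j‖^{−2} ∏_{v ∈ V∖{u,w,z}} d⁴x_v, taken over all assignments x : V∖{u,w,z} → ℝ⁴ extended by x_w = 0 and x_z = e. Then I(u,w,z,e) is finite for every such choice, and its value is independent of the choice of the three distinct vertices u, w, z and of the unit vector e. -/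
/-!
**Independence.** The integral is written as a marginal integral `posE` of a function `kern G u` of
the positions of all vertices. The point reflection `t ↦ e - t` exchanges the vertices at `0` and
`e`, and a reflection moves one unit vector to another. The inversion `t ↦ t / ‖t‖²` exchanges the
vertex at `0` with the deleted vertex `u` (`posE_swap_left`): since the graph is 4-regular, the
Jacobian `‖t‖⁻⁸` of an integrated vertex cancels the factors `‖t‖²` that its four edges produce.
Finally the vertex at `e` can be replaced by another one (`posE_change`), because the partially
integrated kernel is rotation invariant and homogeneous of degree `-8`. These moves connect any two
choices of the three vertices.

**Finiteness.** Let `V` have `N + 1` vertices. For a generic configuration, closest points are merged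
repeatedly until a single cluster is left; this gives each vertex `v ≠ w` a parent `p v` and a
merging distance `r_v`. Up to a constant, every edge is as long as the merging distance at which its
endpoints come together, so the integrand is bounded by a product of powers of the `r_v`. A
clustering into `k` clusters, not all singletons and `k ≥ 2`, has at most `2 (N - k) - 1` inner
edges, one less than the critical number; this is precisely the cut condition applied to each cluster
(`innerCount_bound`). Every intermediate scale therefore gains a factor `(r / r')²`, and altogether
the integrand is at most a constant times `(ρ / R)² ∏ r_v⁻⁴`, with `ρ` the smallest and `R` the
largest merging distance (`greedy_bound`). Since the merging distance of `z` is `1`, the factor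
`(ρ / R)²` bounds a product of small powers of `min (r_v, r_v⁻¹)`, one for each integrated vertex,
and `‖t‖⁻⁴ min (‖t‖, ‖t‖⁻¹) ^ ε` is integrable on `ℝ⁴`. Integrating the vertices along the tree of
parents (`lmarginal_tree`) and summing over the finitely many trees bounds the integral.
-/

open scoped Classical

/-- The set of edges of `G` with one endpoint in `A` and the other outside `A`. -/
noncomputable def cutEdges {V : Type*} [Fintype V] (G : SimpleGraph V) (A : Finset V) :
    Finset (Sym2 V) :=
  G.edgeFinset.filter (fun e => ∃ x, x ∈ e ∧ x ∈ A ∧ ∃ y, y ∈ e ∧ y ∉ A)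

/-- A finite simple graph is *completed primitive* if it is 4-regular, connected, has at
least 3 vertices, and every edge cut separating two parts with at least two vertices each
has size strictly greater than 4. -/
def CompletedPrimitive {V : Type*} [Fintype V] (G : SimpleGraph V) : Prop :=
  (∀ v : V, G.degree v = 4) ∧ G.Connected ∧ 3 ≤ Fintype.card V ∧
    ∀ A : Finset V, 2 ≤ A.card → 2 ≤ Aᶜ.card → 4 < (cutEdges G A).card

open scoped Classical
open MeasureTheory

/-- 4-dimensional Euclidean space. -/
abbrev R4 := EuclideanSpace ℝ (Fin 4)

/-- Extension of an assignment `x` of position vectors to the vertices outside `{u,w,z}`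
by `x_w = 0` and `x_z = e` (the value at `u` is irrelevant). -/
noncomputable def extendPos {V : Type*} (u w z : V) (e : R4)
    (x : {v : V // v ≠ u ∧ v ≠ w ∧ v ≠ z} → R4) (v : V) : R4 :=
  if v = w then 0
  else if v = z then e
  else if h : v ≠ u ∧ v ≠ w ∧ v ≠ z then x ⟨v, h⟩ else 0

/-- The position-space integrand of the period: the product over all edges of `Γ` not
meeting `u` of `‖x_i − x_j‖⁻²`. -/
noncomputable def periodIntegrand {V : Type*} [Fintype V] (G : SimpleGraph V)
    (u w z : V) (e : R4) (x : {v : V // v ≠ u ∧ v ≠ w ∧ v ≠ z} → R4) : ℝ :=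
  ∏ ed ∈ G.edgeFinset.filter (fun ed => u ∉ ed),
    Sym2.lift ⟨fun i j => (‖extendPos u w z e x i - extendPos u w z e x j‖ ^ 2)⁻¹,
      fun i j => by simp [norm_sub_rev]⟩ ed

/-- The affine position-space integral `I(u,w,z,e)` of a graph. -/
noncomputable def positionIntegral {V : Type*} [Fintype V] (G : SimpleGraph V)
    (u w z : V) (e : R4) : ℝ :=
  ∫ x : {v : V // v ≠ u ∧ v ≠ w ∧ v ≠ z} → R4, periodIntegrand G u w z e x

/-- The period of a completed primitive graph on `ℓ + 2` vertices, computed in affine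
position space: `P_Γ = π^{−2(ℓ−1)} I(u,w,z,e)`. -/
noncomputable def period {V : Type*} [Fintype V] (G : SimpleGraph V)
    (u w z : V) (e : R4) : ℝ :=
  (Real.pi ^ (2 * (Fintype.card V - 3)))⁻¹ * positionIntegral G u w z e

section

open scoped ENNReal

variable {V : Type*}

/-! ### Marginal integrals -/

/-- An integral over the configurations of a subtype is a marginal integral of a function of the
configuration of all vertices. -/
lemma lintegral_subtype_eq_lmarginal (P : V → Prop) [inst : Fintype {v : V // P v}]
    (s : Finset V) (hP : ∀ v, P v ↔ v ∈ s) (y : V → R4) (F : (V → R4) → ℝ≥0∞) :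
    ∫⁻ x : {v : V // P v} → R4, F (fun v => if h : P v then x ⟨v, h⟩ else y v)
      = (∫⋯∫⁻_s, F) y := by
  obtain rfl : P = fun v => v ∈ s := funext fun v => propext (hP v)
  obtain rfl : inst = Finset.Subtype.fintype s := Subsingleton.elim _ _
  refine lintegral_congr fun x => congrArg F (funext fun v => ?_)
  by_cases hv : v ∈ s <;> simp [Function.updateFinset, hv]

/-- If `φ` changes variables on `ℝ⁴` with Jacobian `d`, then applying `φ` to every vertex changes
variables in a marginal integral, including its frozen coordinates. -/
lemma lmarginal_change_of_variables (φ : R4 → R4) (hφ : Measurable φ) (d : R4 → ℝ≥0∞)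
    (hd : Measurable d)
    (hφd : ∀ g : R4 → ℝ≥0∞, Measurable g → ∫⁻ t, g t = ∫⁻ t, d t * g (φ t))
    (F : (V → R4) → ℝ≥0∞) (hF : Measurable F) (s : Finset V) (y : V → R4) :
    (∫⋯∫⁻_s, F) (φ ∘ y) = (∫⋯∫⁻_s, fun x => (∏ i ∈ s, d (x i)) * F (φ ∘ x)) y := by
  have hφc : Measurable fun x : V → R4 => φ ∘ x :=
    measurable_pi_iff.2 fun i => hφ.comp (measurable_pi_apply i)
  have hm : ∀ s : Finset V, Measurable fun x : V → R4 => (∏ i ∈ s, d (x i)) * F (φ ∘ x) :=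
    fun s => (Finset.measurable_prod _ fun i _ => hd.comp (measurable_pi_apply i)).mul
      (hF.comp hφc)
  induction s using Finset.induction generalizing y with
  | empty => simp
  | insert i s hi ih =>
    rw [lmarginal_insert _ hF hi, lmarginal_insert _ (hm _) hi,
      hφd (fun t => (∫⋯∫⁻_s, F) (Function.update (φ ∘ y) i t))
        ((hF.lmarginal _).comp (measurable_update _))]
    refine lintegral_congr fun t => ?_
    have : Function.update (φ ∘ y) i (φ t) = φ ∘ Function.update y i t := by
      rw [Function.comp_update]
    rw [this, ih, lmarginal, lmarginal, ← lintegral_const_mul]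
    · refine lintegral_congr fun x => ?_
      rw [Finset.prod_insert hi]
      simp [Function.updateFinset, hi, mul_assoc]
    · exact (hm s).comp measurable_updateFinset

lemma ae_updateFinset_ne (s : Finset V) (y : V → R4) {i j : V} (hi : i ∈ s) (hij : j ≠ i) :
    ∀ᵐ x : s → R4, Function.updateFinset y s x i ≠ Function.updateFinset y s x j := by
  have hm : MeasurableSet {x : V → R4 | x i = x j} :=
    measurableSet_eq_fun (measurable_pi_apply i) (measurable_pi_apply j)
  rw [ae_iff]
  have h1 : MeasurableSet {x : s → R4 | ¬ Function.updateFinset y s x i ≠ Function.updateFinset y s x j} := by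
    simp only [not_not]
    exact measurable_updateFinset hm
  rw [← lintegral_indicator_one h1]
  have h2 : ∫⁻ x : s → R4, Set.indicator {x : s → R4 | ¬ Function.updateFinset y s x i ≠ Function.updateFinset y s x j} 1 x
      = (∫⋯∫⁻_s, Set.indicator {x : V → R4 | x i = x j} 1) y := by
    rw [lmarginal, volume_pi]
    refine lintegral_congr fun x => ?_
    simp [Set.indicator]
  rw [h2, lmarginal_erase' _ (measurable_one.indicator hm) hi]
  have h3 : (fun x : V → R4 => ∫⁻ t : R4, Set.indicator {x : V → R4 | x i = x j}
      (1 : (V → R4) → ℝ≥0∞) (Function.update x i t)) = fun _ => 0 := by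
    funext x
    have : ∀ t, Set.indicator {x : V → R4 | x i = x j} (1 : (V → R4) → ℝ≥0∞) (Function.update x i t)
        = Set.indicator {x j} 1 t := by
      intro t; simp [Set.indicator, hij]
    simp_rw [this]
    rw [lintegral_indicator_one (measurableSet_singleton _)]
    simp
  rw [h3]
  simp [lmarginal]

lemma lmarginal_congr_of_ne (s : Finset V) (y : V → R4) {j : V} (hj : j ∉ s)
    (F F' : (V → R4) → ℝ≥0∞)
    (h : ∀ x : V → R4, (∀ i ∉ s, x i = y i) → (∀ i ∈ s, x i ≠ x j) → F x = F' x) :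
    (∫⋯∫⁻_s, F) y = (∫⋯∫⁻_s, F') y := by
  rw [lmarginal, lmarginal]
  refine lintegral_congr_ae ?_
  have : ∀ᵐ x : s → R4, ∀ i : s,
      Function.updateFinset y s x i ≠ Function.updateFinset y s x j :=
    ae_all_iff.2 fun i => ae_updateFinset_ne s y i.2 (by rintro rfl; exact hj i.2)
  rw [volume_pi] at this
  filter_upwards [this] with x hx
  exact h _ (fun i hi => by simp [Function.updateFinset, hi]) fun i hi => hx ⟨i, hi⟩

/-! ### The integrand, and its invariance under isometries -/

/-- Change of variables under the inversion `t ↦ t / ‖t‖²`, whose Jacobian is `‖t‖⁻⁸`. -/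
lemma lintegral_inversion (g : R4 → ℝ≥0∞) (_hg : Measurable g) :
    ∫⁻ t, g t =
      ∫⁻ t : R4, ENNReal.ofReal ((‖t‖ ^ 8)⁻¹) * g (EuclideanGeometry.inversion 0 1 t) := by
  have hinj : Function.Injective (EuclideanGeometry.inversion (0 : R4) 1) :=
    EuclideanGeometry.inversion_injective 0 one_ne_zero
  have himg : EuclideanGeometry.inversion (0 : R4) 1 '' {0}ᶜ = {0}ᶜ := by
    rw [Set.image_compl_eq (EuclideanGeometry.inversion_bijective (0 : R4) one_ne_zero)]
    simp
  have h := lintegral_image_eq_lintegral_abs_det_fderiv_mul (volume : Measure R4)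
    (s := {0}ᶜ) (measurableSet_singleton (0 : R4)).compl
    (fun x hx => (EuclideanGeometry.hasFDerivAt_inversion (R := 1) hx).hasFDerivWithinAt)
    hinj.injOn g
  rw [himg] at h
  have hr : (volume : Measure R4).restrict {0}ᶜ = volume :=
    Measure.restrict_eq_self_of_ae_mem (by rw [ae_iff]; simp)
  rw [hr] at h
  rw [h]
  refine lintegral_congr fun x => ?_
  congr 2
  set A := (ℝ ∙ (x - 0))ᗮ.reflection with hA
  have hdet : |LinearMap.det (A : R4 →ₗ[ℝ] R4)| = 1 := by
    have h2 : LinearMap.det (A : R4 →ₗ[ℝ] R4) * LinearMap.det (A : R4 →ₗ[ℝ] R4) = 1 := by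
      rw [← LinearMap.det_comp]
      have : (A : R4 →ₗ[ℝ] R4) ∘ₗ (A : R4 →ₗ[ℝ] R4) = LinearMap.id := by
        ext1 y
        simp [hA]
      rw [this, LinearMap.det_id]
    exact (sq_eq_sq₀ (abs_nonneg _) zero_le_one).1 (by rw [sq_abs, sq, h2, one_pow])
  have h3 : ((1 / dist x 0) ^ 2 • ((A : R4 ≃L[ℝ] R4) : R4 →L[ℝ] R4)).det
      = ((1 / dist x 0) ^ 2) ^ 4 * LinearMap.det (A : R4 →ₗ[ℝ] R4) := by
    have := LinearMap.det_smul ((1 / dist x 0) ^ 2) (A : R4 →ₗ[ℝ] R4)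
    rw [finrank_euclideanSpace_fin] at this
    exact this
  refine (congrArg abs h3).trans ?_
  rw [abs_mul, hdet, mul_one, dist_zero_right, abs_of_nonneg (by positivity), ← pow_mul]
  simp

lemma lintegral_smul (r : ℝ) (hr : 0 < r) (g : R4 → ℝ≥0∞) (hg : Measurable g) :
    ∫⁻ t, g t = ∫⁻ t : R4, ENNReal.ofReal (r ^ 4) * g (r • t) := by
  rw [lintegral_const_mul _ (f := fun t => g (r • t)) (hg.comp (measurable_const_smul r)),
    ← lintegral_map hg (measurable_const_smul r), Measure.map_addHaar_smul _ hr.ne',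
    lintegral_smul_measure, finrank_euclideanSpace_fin, smul_eq_mul, ← mul_assoc,
    ← ENNReal.ofReal_mul (by positivity), abs_of_pos (by positivity),
    mul_inv_cancel₀ (by positivity), ENNReal.ofReal_one, one_mul]

lemma measurable_inversion : Measurable (EuclideanGeometry.inversion (0 : R4) 1) := by
  unfold EuclideanGeometry.inversion
  fun_prop

/-- The Euclidean length of the segment that `y` assigns to an unordered pair of vertices. -/
noncomputable def edgeLen (y : V → R4) : Sym2 V → ℝ :=
  Sym2.lift ⟨fun i j => ‖y i - y j‖, fun _ _ => norm_sub_rev _ _⟩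

@[simp] lemma edgeLen_mk (y : V → R4) (i j : V) : edgeLen y s(i, j) = ‖y i - y j‖ := rfl

lemma edgeLen_nonneg (y : V → R4) (ed : Sym2 V) : 0 ≤ edgeLen y ed := by
  induction ed with | _ i j => simp

/-- The edges of `G` that do not meet `u`. -/
noncomputable def edgesOff [Fintype V] (G : SimpleGraph V) (u : V) : Finset (Sym2 V) :=
  G.edgeFinset.filter (fun ed => u ∉ ed)

/-- The position-space integrand as a function of a configuration of all vertices; it does not
depend on the position of `u`. -/
noncomputable def kern [Fintype V] (G : SimpleGraph V) (u : V) (y : V → R4) : ℝ :=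
  ∏ ed ∈ edgesOff G u, (edgeLen y ed ^ 2)⁻¹

lemma kern_nonneg [Fintype V] (G : SimpleGraph V) (u : V) (y : V → R4) : 0 ≤ kern G u y :=
  Finset.prod_nonneg fun _ _ => by positivity

lemma measurable_edgeLen (ed : Sym2 V) : Measurable fun y : V → R4 => edgeLen y ed := by
  induction ed with | _ i j => simp only [edgeLen_mk]; fun_prop

lemma measurable_kern [Fintype V] (G : SimpleGraph V) (u : V) : Measurable (kern G u) :=
  Finset.measurable_prod _ fun ed _ => ((measurable_edgeLen ed).pow_const 2).inv

lemma measurable_kernE [Fintype V] (G : SimpleGraph V) (u : V) :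
    Measurable fun y => ENNReal.ofReal (kern G u y) :=
  (measurable_kern G u).ennreal_ofReal

lemma periodIntegrand_eq_kern [Fintype V] (G : SimpleGraph V) (u w z : V) (e : R4)
    (x : {v : V // v ≠ u ∧ v ≠ w ∧ v ≠ z} → R4) :
    periodIntegrand G u w z e x = kern G u (extendPos u w z e x) := by
  refine Finset.prod_congr rfl fun ed _ => ?_
  induction ed with | _ i j => rfl

lemma kern_congr_edgeLen [Fintype V] (G : SimpleGraph V) (u : V) {y y' : V → R4}
    (h : ∀ i j, i ≠ u → j ≠ u → ‖y i - y j‖ = ‖y' i - y' j‖) : kern G u y = kern G u y' := by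
  refine Finset.prod_congr rfl fun ed hed => ?_
  induction ed with | _ i j =>
  have hu := (Finset.mem_filter.1 hed).2
  simp only [Sym2.mem_iff, not_or] at hu
  rw [edgeLen_mk, edgeLen_mk, h i j (Ne.symm hu.1) (Ne.symm hu.2)]

/-- The integral `I(u,w,z,e)` as an extended nonnegative number. -/
noncomputable def posE [Fintype V] (G : SimpleGraph V) (u w z : V) (e : R4) : ℝ≥0∞ :=
  (∫⋯∫⁻_({u, w, z}ᶜ : Finset V), fun y => ENNReal.ofReal (kern G u y))
    (fun v => if v = z then e else 0)

/-- The base configuration of the marginal integral matters only through its values at `w` and `z`. -/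
lemma posE_eq [Fintype V] (G : SimpleGraph V) {u w z : V} (e : R4) (hwz : w ≠ z) (y : V → R4)
    (hw : y w = 0) (hz : y z = e) :
    (∫⋯∫⁻_({u, w, z}ᶜ : Finset V), fun y => ENNReal.ofReal (kern G u y)) y
      = posE G u w z e := by
  rw [posE, lmarginal, lmarginal]
  refine lintegral_congr fun x => ?_
  refine congrArg ENNReal.ofReal (kern_congr_edgeLen G u fun i j hi hj => ?_)
  have : ∀ k, k ≠ u → Function.updateFinset y {u, w, z}ᶜ x k =
      Function.updateFinset (fun v => if v = z then e else 0) {u, w, z}ᶜ x k := by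
    intro k hk
    by_cases hkw : k = w
    · subst hkw; simp [Function.updateFinset, hw, hwz]
    by_cases hkz : k = z
    · subst hkz; simp [Function.updateFinset, hz]
    simp [Function.updateFinset, hk, hkw, hkz]
  rw [this i hi, this j hj]

lemma lintegral_periodIntegrand [Fintype V] (G : SimpleGraph V) {u w z : V} (e : R4)
    (hwz : w ≠ z) :
    ∫⁻ x, ENNReal.ofReal (periodIntegrand G u w z e x) = posE G u w z e := by
  rw [posE, ← lintegral_subtype_eq_lmarginal (fun v => v ≠ u ∧ v ≠ w ∧ v ≠ z) _ (by simp)]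
  refine lintegral_congr fun x => ?_
  rw [periodIntegrand_eq_kern]
  refine congrArg ENNReal.ofReal (kern_congr_edgeLen G u fun i j hi hj => ?_)
  have : ∀ k, k ≠ u → extendPos u w z e x k =
      if h : k ≠ u ∧ k ≠ w ∧ k ≠ z then x ⟨k, h⟩ else if k = z then e else 0 := by
    intro k hk
    unfold extendPos
    by_cases hkw : k = w
    · subst hkw; simp [hwz]
    by_cases hkz : k = z
    · subst hkz; simp [hkw]
    simp [hk, hkw, hkz]
  rw [this i hi, this j hj]
  congr!

lemma posE_isometry [Fintype V] (G : SimpleGraph V) (u : V) (s : Finset V) (φ : R4 → R4)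
    (hφ : Isometry φ) (hm : MeasurePreserving φ) (y : V → R4) :
    (∫⋯∫⁻_s, fun y => ENNReal.ofReal (kern G u y)) (φ ∘ y)
      = (∫⋯∫⁻_s, fun y => ENNReal.ofReal (kern G u y)) y := by
  rw [lmarginal_change_of_variables φ hm.measurable (fun _ => 1) measurable_const
    (fun g hg => by simpa using (hm.lintegral_comp hg).symm) _ (measurable_kernE G u)]
  have : ∀ x : V → R4, kern G u (φ ∘ x) = kern G u x := fun x =>
    kern_congr_edgeLen G u fun i j _ _ => by
      simpa [dist_eq_norm] using hφ.dist_eq (x i) (x j)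
  simp [this]

/-- Vectors of equal norm are exchanged by a reflection. -/
lemma posE_rotate [Fintype V] (G : SimpleGraph V) {u w z : V} {e e' : R4} (hwz : w ≠ z)
    (h : ‖e‖ = ‖e'‖) : posE G u w z e = posE G u w z e' := by
  set A := (ℝ ∙ (e - e'))ᗮ.reflection with hA
  have h1 : A e = e' := Submodule.reflection_sub h
  rw [posE, ← posE_isometry G u _ A A.isometry A.measurePreserving]
  exact posE_eq G e' hwz _ (by simp [hwz]) (by simp [h1])

/-- The point reflection `t ↦ e - t` exchanges the vertices at `0` and `e`. -/
lemma posE_swap_right [Fintype V] (G : SimpleGraph V) {u w z : V} (e : R4) (hwz : w ≠ z) :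
    posE G u w z e = posE G u z w e := by
  rw [posE, ← posE_isometry G u _ (fun t => e - t) (IsometryEquiv.subLeft e).isometry
    (Measure.measurePreserving_sub_left volume e)]
  have hs : ({u, w, z} : Finset V) = {u, z, w} := by ext; simp; tauto
  rw [hs]
  exact posE_eq G e hwz.symm _ (by simp) (by simp [hwz])

/-! ### Inversion, scaling, and independence of the choices -/

/-- The product of the two values that `N` takes on an unordered pair. -/
noncomputable def pairProd (N : V → ℝ) : Sym2 V → ℝ :=
  Sym2.lift ⟨fun i j => N i * N j, fun _ _ => mul_comm _ _⟩

@[simp] lemma pairProd_mk (N : V → ℝ) (i j : V) : pairProd N s(i, j) = N i * N j := rfl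

/-- Every vertex lies on four edges, so it contributes the fourth power of its weight. -/
lemma prod_pairProd [Fintype V] (G : SimpleGraph V) (h4 : ∀ v, G.degree v = 4) (N : V → ℝ) :
    ∏ ed ∈ G.edgeFinset, pairProd N ed = ∏ v, N v ^ 4 := by
  have h1 : ∀ ed ∈ G.edgeFinset, pairProd N ed = ∏ v, if v ∈ ed then N v else 1 := by
    intro ed hed
    induction ed with | _ i j =>
    have hij : i ≠ j := by
      rw [SimpleGraph.mem_edgeFinset, SimpleGraph.mem_edgeSet] at hed
      exact hed.ne
    rw [← Finset.prod_filter]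
    have : (Finset.univ.filter fun v => v ∈ s(i, j)) = {i, j} := by ext; simp
    rw [this, Finset.prod_pair hij, pairProd_mk]
  rw [Finset.prod_congr rfl h1, Finset.prod_comm]
  refine Finset.prod_congr rfl fun v _ => ?_
  rw [← Finset.prod_filter, Finset.prod_const, ← SimpleGraph.incidenceFinset_eq_filter,
    SimpleGraph.card_incidenceFinset_eq_degree, h4]

lemma card_edgeFinset [Fintype V] (G : SimpleGraph V) (h4 : ∀ v, G.degree v = 4) :
    G.edgeFinset.card = 2 * Fintype.card V := by
  have := G.sum_degrees_eq_twice_card_edges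
  simp only [h4, Finset.sum_const, Finset.card_univ, smul_eq_mul] at this
  omega

lemma card_edgesOff [Fintype V] (G : SimpleGraph V) (h4 : ∀ v, G.degree v = 4) (u : V) :
    (edgesOff G u).card + 4 = 2 * Fintype.card V := by
  rw [← card_edgeFinset G h4, edgesOff, ← h4 u, ← SimpleGraph.card_incidenceFinset_eq_degree,
    SimpleGraph.incidenceFinset_eq_filter, add_comm]
  exact Finset.card_filter_add_card_filter_not _

/-- Under inversion `‖x i - x j‖²` is divided by `‖x i‖² ‖x j‖²`. By 4-regularity the Jacobian
factors cancel against these, except that the edges at `w`, which sits at the origin, are replaced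
by the edges at `u`, which takes over the origin. -/
lemma kern_inversion [Fintype V] (G : SimpleGraph V) (h4 : ∀ v, G.degree v = 4) {u w z : V}
    (huw : u ≠ w) (huz : u ≠ z) (hwz : w ≠ z)
    (x : V → R4) (hu : x u = 0) (hw : x w = 0) (hz : ‖x z‖ = 1)
    (hx : ∀ i ∈ ({u, w, z}ᶜ : Finset V), x i ≠ 0) :
    (∏ i ∈ ({u, w, z}ᶜ : Finset V), (‖x i‖ ^ 8)⁻¹) *
      kern G u (EuclideanGeometry.inversion 0 1 ∘ x) = kern G w x := by
  -- the norms of the positions, with the two vertices at the origin given weight `1`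
  set N : V → ℝ := fun v => if v = u ∨ v = w then 1 else ‖x v‖ with hN
  have hx0 : ∀ v, v ≠ u → v ≠ w → x v ≠ 0 := by
    intro v h1 h2
    by_cases h3 : v = z
    · subst h3; intro h; simp [h] at hz
    · exact hx v (by simp [h1, h2, h3])
  have hN0 : ∀ v, N v ≠ 0 := by
    intro v
    by_cases h : v = u ∨ v = w
    · simp [hN, h]
    · have h' := not_or.1 h
      simpa [hN, h] using hx0 v h'.1 h'.2
  have hP0 : ∀ ed, pairProd N ed ≠ 0 := by
    intro ed
    induction ed with | _ i j => simp [hN0]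
  set E := G.edgeFinset with hE
  -- the edges that avoid both `u` and `w` contribute the common factor `q`
  set q : Sym2 V → ℝ := fun ed => if u ∈ ed ∨ w ∈ ed then 1 else (edgeLen x ed ^ 2)⁻¹ with hq
  have hne : ∀ ed ∈ E, ¬ ed.IsDiag := fun ed hed =>
    G.not_isDiag_of_mem_edgeSet (SimpleGraph.mem_edgeFinset.1 hed)
  have hk1 : kern G u (EuclideanGeometry.inversion 0 1 ∘ x)
      = ∏ ed ∈ E, if u ∈ ed then 1 else q ed * pairProd N ed ^ 2 := by
    rw [kern, edgesOff, Finset.prod_filter]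
    refine Finset.prod_congr rfl fun ed hed => ?_
    have hd := hne ed hed
    induction ed with | _ i j =>
    simp only [Sym2.mk_isDiag_iff] at hd
    by_cases h : u ∈ s(i, j)
    · simp [h]
    have h' : i ≠ u ∧ j ≠ u := by
      simp only [Sym2.mem_iff, not_or] at h; exact ⟨Ne.symm h.1, Ne.symm h.2⟩
    rw [if_pos h, if_neg h, edgeLen_mk, pairProd_mk]
    simp only [Function.comp_apply]
    by_cases hi : i = w
    · subst hi
      have hj : j ≠ i := Ne.symm hd
      rw [hw, EuclideanGeometry.inversion_self, ← dist_eq_norm,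
        EuclideanGeometry.dist_center_inversion]
      simp [hq, hN, hj, h'.2]
    by_cases hj : j = w
    · subst hj
      rw [hw, EuclideanGeometry.inversion_self, ← dist_eq_norm,
        EuclideanGeometry.dist_inversion_center]
      simp [hq, hN, hi, h'.1]
    rw [← dist_eq_norm, EuclideanGeometry.dist_inversion_inversion (hx0 i h'.1 hi)
      (hx0 j h'.2 hj)]
    have e1 : ¬ (u ∈ s(i, j) ∨ w ∈ s(i, j)) := by
      simp [h'.1.symm, h'.2.symm, Ne.symm hi, Ne.symm hj]
    simp only [hq, if_neg e1, hN, h'.1, h'.2, hi, hj, or_self, if_false, edgeLen_mk,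
      dist_eq_norm, sub_zero]
    have n1 : ‖x i‖ ≠ 0 := norm_ne_zero_iff.2 (hx0 i h'.1 hi)
    have n2 : ‖x j‖ ≠ 0 := norm_ne_zero_iff.2 (hx0 j h'.2 hj)
    simp only [one_pow, one_div, mul_pow, mul_inv, inv_pow, inv_inv]
    ring
  have hk2 : kern G w x = ∏ ed ∈ E, if u ∈ ed then (pairProd N ed ^ 2)⁻¹ else q ed := by
    rw [kern, edgesOff, Finset.prod_filter]
    refine Finset.prod_congr rfl fun ed hed => ?_
    have hd := hne ed hed
    induction ed with | _ i j =>
    simp only [Sym2.mk_isDiag_iff] at hd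
    by_cases h : u ∈ s(i, j)
    · rw [if_pos h]
      rcases Sym2.mem_iff.1 h with h | h
      · subst h
        by_cases hj : j = w
        · subst hj; simp [hN]
        · have : w ≠ u ∧ w ≠ j := ⟨huw.symm, Ne.symm hj⟩
          simp [hN, hj, Ne.symm hd, hu, this.1, this.2]
      · subst h
        by_cases hi : i = w
        · subst hi; simp [hN]
        · have : w ≠ u ∧ w ≠ i := ⟨huw.symm, Ne.symm hi⟩
          simp [hN, hi, hd, hu, this.1, this.2]
    · rw [if_neg h]
      by_cases h2 : w ∈ s(i, j)
      · simp [hq, h2]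
      · simp only [hq, h, h2, or_self, if_false, not_false_eq_true, if_true]
  have hk3 : ∏ i ∈ ({u, w, z}ᶜ : Finset V), (‖x i‖ ^ 8)⁻¹
      = ∏ ed ∈ E, (pairProd N ed ^ 2)⁻¹ := by
    rw [Finset.prod_inv_distrib, Finset.prod_inv_distrib, Finset.prod_pow E 2,
      prod_pairProd G h4, ← Finset.prod_pow]
    congr 1
    rw [← Finset.prod_subset (Finset.subset_univ ({u, w, z}ᶜ : Finset V))]
    · refine Finset.prod_congr rfl fun v hv => ?_
      simp only [Finset.mem_compl, Finset.mem_insert, Finset.mem_singleton, not_or] at hv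
      simp [hN, hv.1, hv.2.1, ← pow_mul]
    · intro v _ hv
      simp only [Finset.mem_compl, Finset.mem_insert, Finset.mem_singleton, not_not] at hv
      rcases hv with rfl | rfl | rfl
      · simp [hN]
      · simp [hN]
      · simp [hN, huz.symm, hwz.symm, hz]
  rw [hk1, hk2, hk3, ← Finset.prod_mul_distrib]
  refine Finset.prod_congr rfl fun ed _ => ?_
  have := hP0 ed
  split_ifs
  · simp
  · field_simp

/-- Inversion in the unit sphere exchanges the vertex at the origin with the one at infinity. -/
lemma posE_swap_left [Fintype V] (G : SimpleGraph V) (h4 : ∀ v, G.degree v = 4) {u w z : V}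
    {e : R4} (huw : u ≠ w) (huz : u ≠ z) (hwz : w ≠ z) (he : ‖e‖ = 1) :
    posE G u w z e = posE G w u z e := by
  have hφe : EuclideanGeometry.inversion (0 : R4) 1 e = e :=
    EuclideanGeometry.inversion_of_mem_sphere (by simpa using he)
  have hs : ({u, w, z} : Finset V) = {w, u, z} := by ext; simp; tauto
  have hd : Measurable fun t : R4 => ENNReal.ofReal ((‖t‖ ^ 8)⁻¹) := by fun_prop
  set y : V → R4 := fun v => if v = z then e else 0 with hy
  rw [← posE_eq G e hwz (EuclideanGeometry.inversion 0 1 ∘ y) (by simp [hy, hwz])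
      (by simp [hy, hφe]),
    lmarginal_change_of_variables _ measurable_inversion _ hd lintegral_inversion _
      (measurable_kernE G u),
    lmarginal_congr_of_ne (j := w) _ _ (by simp) _ (fun x => ENNReal.ofReal (kern G w x)), hs]
  · rfl
  · intro x hx1 hx2
    have h1 : x u = 0 := by rw [hx1 u (by simp)]; simp [hy, huz]
    have h2 : x w = 0 := by rw [hx1 w (by simp)]; simp [hy, hwz]
    have h3 : x z = e := by rw [hx1 z (by simp)]; simp [hy]
    rw [← ENNReal.ofReal_prod_of_nonneg (fun _ _ => by positivity),
      ← ENNReal.ofReal_mul (Finset.prod_nonneg fun _ _ => by positivity)]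
    congr 1
    exact kern_inversion G h4 huw huz hwz x h1 h2 (by rw [h3, he])
      (fun i hi => by simpa [h2] using hx2 i hi)

/-- Scaling by `r` of the integrand together with `card V - 4` integrations: homogeneity of degree
`-8`. -/
lemma kern_smul [Fintype V] (G : SimpleGraph V) (h4 : ∀ v, G.degree v = 4)
    (hcard : 4 ≤ Fintype.card V) (u : V) (r : ℝ) (hr : 0 < r) (x : V → R4) :
    r ^ 8 * ((r ^ 4) ^ (Fintype.card V - 4) * kern G u (fun v => r • x v)) = kern G u x := by
  have h : kern G u (fun v => r • x v) = ((r ^ 2)⁻¹) ^ (edgesOff G u).card * kern G u x := by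
    rw [kern, kern, ← Finset.prod_const, ← Finset.prod_mul_distrib]
    refine Finset.prod_congr rfl fun ed _ => ?_
    induction ed with | _ i j =>
    rw [edgeLen_mk, edgeLen_mk, ← smul_sub, norm_smul, mul_pow, mul_inv, Real.norm_eq_abs, sq_abs]
  have hc := card_edgesOff G h4 u
  obtain ⟨m, hm⟩ := Nat.exists_eq_add_of_le hcard
  have h1 : (edgesOff G u).card = 2 * m + 4 := by omega
  rw [h, h1, hm, Nat.add_sub_cancel_left]
  have : r ≠ 0 := hr.ne'
  rw [inv_pow, ← pow_mul, ← pow_mul]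
  field_simp
  ring

/-- Independence of the vertex put at the unit vector. With every vertex except `z`, `z'` integrated
out, the integral is a function `H a b` of the positions of `z` and `z'` that is invariant under
rotations and homogeneous of degree `-8`. A rotation combined with a scaling takes `(e, b)` to
`(ι b, e)`, where `ι` is the inversion in the unit sphere, and the scaling factor is
the Jacobian of `ι`. -/
lemma posE_change [Fintype V] (G : SimpleGraph V) (h4 : ∀ v, G.degree v = 4)
    {u w z z' : V} {e : R4} (huw : u ≠ w) (huz : u ≠ z) (hwz : w ≠ z) (huz' : u ≠ z')
    (hwz' : w ≠ z') (hzz' : z ≠ z') (he : ‖e‖ = 1) :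
    posE G u w z e = posE G u w z' e := by
  set s : Finset V := {u, w, z, z'}ᶜ with hs
  have hsc : ({u, w, z, z'} : Finset V).card = 4 := by
    rw [Finset.card_insert_of_notMem, Finset.card_insert_of_notMem, Finset.card_pair hzz'] <;>
      simp [*]
  have hcard : 4 ≤ Fintype.card V := by
    rw [← hsc]; exact Finset.card_le_univ _
  have hscard : s.card = Fintype.card V - 4 := by rw [hs, Finset.card_compl, hsc]
  set Y : R4 → R4 → V → R4 := fun a b v => if v = z then a else if v = z' then b else 0 with hY
  set H : R4 → R4 → ℝ≥0∞ := fun a b =>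
    (∫⋯∫⁻_s, fun y => ENNReal.ofReal (kern G u y)) (Y a b) with hH
  have hz : posE G u w z e = ∫⁻ b, H e b := by
    have h1 : ({u, w, z}ᶜ : Finset V) = insert z' s := by
      ext v; by_cases h : v = z' <;> simp [hs, h, huz'.symm, hwz'.symm, hzz'.symm]
    rw [posE, h1, lmarginal_insert _ (measurable_kernE G u) (by simp [hs])]
    refine lintegral_congr fun b => congrArg _ (funext fun v => ?_)
    by_cases h : v = z'
    · subst h; simp [hY, hzz'.symm]
    · simp [hY, h]
  have hz' : posE G u w z' e = ∫⁻ a, H a e := by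
    have h1 : ({u, w, z'}ᶜ : Finset V) = insert z s := by
      ext v; by_cases h : v = z <;> simp [hs, h, huz.symm, hwz.symm, hzz']
    rw [posE, h1, lmarginal_insert _ (measurable_kernE G u) (by simp [hs])]
    refine lintegral_congr fun b => congrArg _ (funext fun v => ?_)
    by_cases h : v = z
    · subst h; simp [hY]
    · simp [hY, h]
  have hrot : ∀ (A : R4 ≃ₗᵢ[ℝ] R4) a b, H (A a) (A b) = H a b := by
    intro A a b
    simp only [hH]
    rw [← posE_isometry G u s A A.isometry A.measurePreserving (Y a b)]
    refine congrArg _ (funext fun v => ?_)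
    simp only [hY, Function.comp_apply]
    split_ifs <;> simp
  have hscale : ∀ r : ℝ, 0 < r → ∀ a b,
      ENNReal.ofReal (r ^ 8) * H (r • a) (r • b) = H a b := by
    intro r hr a b
    have h1 : Y (r • a) (r • b) = (fun t => r • t) ∘ Y a b := by
      funext v
      simp only [hY, Function.comp_apply]
      split_ifs <;> simp
    simp only [hH]
    have hmc : Measurable fun x : V → R4 => fun v => r • x v :=
      measurable_pi_iff.2 fun v => (measurable_pi_apply v).const_smul r
    rw [h1, lmarginal_change_of_variables _ (measurable_const_smul r)
      (fun _ => ENNReal.ofReal (r ^ 4)) measurable_const (lintegral_smul r hr) _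
      (measurable_kernE G u), lmarginal, lmarginal, ← lintegral_const_mul]
    · refine lintegral_congr fun x => ?_
      rw [Finset.prod_const, hscard, ← ENNReal.ofReal_pow (by positivity),
        ← ENNReal.ofReal_mul (by positivity), ← ENNReal.ofReal_mul (by positivity)]
      exact congrArg ENNReal.ofReal (kern_smul G h4 hcard u r hr _)
    · exact (measurable_const.mul ((measurable_kernE G u).comp hmc)).comp measurable_updateFinset
  have hmeas : Measurable fun a => H a e := by
    have : Measurable fun a => Y a e := by
      refine measurable_pi_iff.2 fun v => ?_
      simp only [hY]
      split_ifs
      · exact measurable_id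
      · exact measurable_const
      · exact measurable_const
    exact ((measurable_kernE G u).lmarginal _).comp this
  rw [hz, hz', lintegral_inversion _ hmeas]
  have hae : ∀ᵐ b : R4, b ≠ 0 := by rw [ae_iff]; simp
  refine lintegral_congr_ae ?_
  filter_upwards [hae] with b hb
  have hb' : 0 < ‖b‖ := norm_pos_iff.2 hb
  set b₁ : R4 := ‖b‖⁻¹ • b with hb₁
  have hn : ‖e‖ = ‖b₁‖ := by
    rw [he, hb₁, norm_smul, norm_inv, norm_norm, inv_mul_cancel₀ hb'.ne']
  set A := (ℝ ∙ (e - b₁))ᗮ.reflection with hA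
  have hA1 : A e = b₁ := Submodule.reflection_sub hn
  have hA2 : A b₁ = e := by rw [← hA1, hA, Submodule.reflection_reflection]
  rw [← hscale ‖b‖⁻¹ (inv_pos.2 hb') e b, ← hb₁, ← hrot A, hA2, map_smul, hA1, hb₁, smul_smul,
    inv_pow]
  congr 2
  simp [EuclideanGeometry.inversion, sq]

/-- The integral does not depend on the choice of the three vertices and the unit vector:
the transpositions of the three roles and the replacement of one vertex connect any two
choices. -/
lemma posE_independent [Fintype V] (G : SimpleGraph V) (h4 : ∀ v, G.degree v = 4)
    {u w z u' w' z' : V} {e e' : R4} (huw : u ≠ w) (huz : u ≠ z) (hwz : w ≠ z) (he : ‖e‖ = 1)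
    (huw' : u' ≠ w') (huz' : u' ≠ z') (hwz' : w' ≠ z') (he' : ‖e'‖ = 1) :
    posE G u w z e = posE G u' w' z' e' := by
  rw [posE_rotate G hwz' (he'.trans he.symm)]
  clear he' e'
  have hch : ∀ {a b c d : V}, a ≠ b → a ≠ c → b ≠ c → a ≠ d → b ≠ d →
      posE G a b c e = posE G a b d e := by
    intro a b c d h1 h2 h3 h4' h5
    by_cases h : c = d
    · rw [h]
    · exact posE_change G h4 h1 h2 h3 h4' h5 h he
  have hr : ∀ {a b c : V}, b ≠ c → posE G a b c e = posE G a c b e :=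
    fun h => posE_swap_right G e h
  have hl : ∀ {a b c : V}, a ≠ b → a ≠ c → b ≠ c → posE G a b c e = posE G b a c e :=
    fun h1 h2 h3 => posE_swap_left G h4 h1 h2 h3 he
  -- it suffices to move `u` to `u'`, since the other two vertices can then be replaced in turn
  have hfix : ∀ {a b c b' c' : V}, a ≠ b → a ≠ c → b ≠ c → a ≠ b' → a ≠ c' → b' ≠ c' →
      posE G a b c e = posE G a b' c' e := by
    intro a b c b' c' h1 h2 h3 h4' h5 h6
    by_cases h : b = c'
    · subst h
      rw [hch h1 h2 h3 h4' h6.symm, hr h6.symm]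
    · rw [hch h1 h2 h3 h5 h, hr h, hch h5 h1 (Ne.symm h) h4' h6.symm, hr h6.symm]
  by_cases huu : u = u'
  · subst huu
    exact hfix huw huz hwz huw' huz' hwz'
  obtain ⟨t, htu, htu'⟩ : ∃ t, u ≠ t ∧ u' ≠ t := by
    by_cases h : u' = w
    · exact ⟨z, huz, h ▸ hwz⟩
    · exact ⟨w, huw, h⟩
  rw [hfix huw huz hwz huu htu htu', hl huu htu htu',
    hfix (Ne.symm huu) htu' htu huw' huz' hwz']

/-! ### Counting edges inside clusters -/

/-- The number of edges of `G` with both endpoints in `A`. -/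
noncomputable def insideCount [Fintype V] (G : SimpleGraph V) (A : Finset V) : ℕ :=
  (G.edgeFinset.filter fun ed => ∀ v ∈ ed, v ∈ A).card

lemma two_mul_insideCount_add_cut [Fintype V] (G : SimpleGraph V) (h4 : ∀ v, G.degree v = 4)
    (A : Finset V) : 2 * insideCount G A + (cutEdges G A).card = 4 * A.card := by
  have h1 : ∑ v ∈ A, G.degree v = 4 * A.card := by simp [h4, mul_comm]
  have h2 : ∑ v ∈ A, G.degree v = ∑ ed ∈ G.edgeFinset, (A.filter fun v => v ∈ ed).card := by
    simp_rw [← SimpleGraph.card_incidenceFinset_eq_degree, SimpleGraph.incidenceFinset_eq_filter]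
    exact Finset.sum_card_bipartiteAbove_eq_sum_card_bipartiteBelow (fun v ed => v ∈ ed)
  have h3 : ∀ ed ∈ G.edgeFinset, (A.filter fun v => v ∈ ed).card
      = 2 * (if ∀ v ∈ ed, v ∈ A then 1 else 0)
        + (if ∃ x, x ∈ ed ∧ x ∈ A ∧ ∃ y, y ∈ ed ∧ y ∉ A then 1 else 0) := by
    intro ed hed
    induction ed with | _ i j =>
    have hij : i ≠ j := by
      rw [SimpleGraph.mem_edgeFinset, SimpleGraph.mem_edgeSet] at hed
      exact hed.ne
    by_cases hi : i ∈ A <;> by_cases hj : j ∈ A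
    · have : (A.filter fun v => v ∈ s(i, j)) = {i, j} := by
        ext v; simp only [Finset.mem_filter, Sym2.mem_iff, Finset.mem_insert,
          Finset.mem_singleton]; aesop
      rw [this, Finset.card_pair hij]; simp [hi, hj]
    · have : (A.filter fun v => v ∈ s(i, j)) = {i} := by
        ext v; simp only [Finset.mem_filter, Sym2.mem_iff,
          Finset.mem_singleton]; aesop
      rw [this]; simp [hi, hj]
    · have : (A.filter fun v => v ∈ s(i, j)) = {j} := by
        ext v; simp only [Finset.mem_filter, Sym2.mem_iff,
          Finset.mem_singleton]; aesop
      rw [this]; simp [hi, hj]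
    · have : (A.filter fun v => v ∈ s(i, j)) = ∅ := by
        ext v; simp only [Finset.mem_filter, Sym2.mem_iff]; aesop
      rw [this]; simp [hi, hj]
  rw [Finset.sum_congr rfl h3, Finset.sum_add_distrib, ← Finset.mul_sum,
    ← Finset.card_filter, ← Finset.card_filter] at h2
  rw [← h1, h2, insideCount, cutEdges]

/-- A nonempty vertex set whose complement has at least two vertices spans at most `2 |A| - 2` edges, and at
most `2 |A| - 3` unless it is a singleton. This is where primitivity enters. -/
lemma insideCount_bound [Fintype V] (G : SimpleGraph V) (hG : CompletedPrimitive G)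
    (A : Finset V) (h1 : A.Nonempty) (h2 : A.card + 2 ≤ Fintype.card V) :
    insideCount G A + 2 ≤ 2 * A.card ∧ (2 ≤ A.card → insideCount G A + 3 ≤ 2 * A.card) := by
  have hc := two_mul_insideCount_add_cut G hG.1 A
  have h3 : 2 ≤ A.card → insideCount G A + 3 ≤ 2 * A.card := by
    intro h
    have := hG.2.2.2 A h (by rw [Finset.card_compl]; omega)
    omega
  refine ⟨?_, h3⟩
  by_cases h : 2 ≤ A.card
  · have := h3 h; omega
  · have hA : A.card = 1 := by have := h1.card_pos; omega
    obtain ⟨a, rfl⟩ := Finset.card_eq_one.1 hA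
    have : insideCount G {a} = 0 := by
      rw [insideCount, Finset.card_eq_zero, Finset.filter_eq_empty_iff]
      intro ed hed
      induction ed with | _ i j =>
      rw [SimpleGraph.mem_edgeFinset, SimpleGraph.mem_edgeSet] at hed
      intro h
      simp only [Sym2.mem_iff, Finset.mem_singleton] at h
      exact hed.ne ((h i (Or.inl rfl)).trans (h j (Or.inr rfl)).symm)
    simp [this]

/-- The number of edges off `u` whose endpoints lie in the same cluster, where a clustering of
the vertices is given by the map `c` sending a vertex to the representative of its cluster. -/
noncomputable def innerCount [Fintype V] (G : SimpleGraph V) (u : V) (c : V → V) : ℕ :=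
  ((edgesOff G u).filter fun ed => (ed.map c).IsDiag).card

/-- The integrand restricted to the edges between different clusters, with every vertex moved to
the position of the representative of its cluster. -/
noncomputable def outerProd [Fintype V] (G : SimpleGraph V) (u : V) (x : V → R4) (c : V → V) : ℝ :=
  ∏ ed ∈ (edgesOff G u).filter (fun ed => ¬ (ed.map c).IsDiag), (edgeLen x (ed.map c) ^ 2)⁻¹

/-- A clustering of the vertices other than `u` into at least two clusters, not all singletons, with
`S` the set of representatives, has strictly subcritical inner edge count. -/
lemma innerCount_bound [Fintype V] (G : SimpleGraph V) (hG : CompletedPrimitive G) {u : V}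
    {S : Finset V} {c : V → V} (hS : u ∉ S) (h2 : 2 ≤ S.card)
    (hlt : S.card + 1 < Fintype.card V) (hc : ∀ v, v ≠ u → c v ∈ S) (hcS : ∀ a ∈ S, c a = a) :
    innerCount G u c + 2 * S.card + 3 ≤ 2 * Fintype.card V := by
  set A : V → Finset V := fun a => (Finset.univ.erase u).filter fun v => c v = a with hA
  have hsum : ∑ a ∈ S, (A a).card + 1 = Fintype.card V := by
    have := Finset.card_eq_sum_card_fiberwise (s := Finset.univ.erase u) (t := S) (f := c)
      (fun v hv => hc v (by simpa using hv))
    rw [Finset.card_erase_of_mem (Finset.mem_univ _), Finset.card_univ] at this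
    have h0 : 0 < Fintype.card V := by omega
    simp only [hA]
    omega
  have hin : innerCount G u c ≤ ∑ a ∈ S, insideCount G (A a) := by
    refine le_trans (Finset.card_le_card ?_)
      (Finset.card_biUnion_le (s := S) (t := fun a => G.edgeFinset.filter fun ed => ∀ v ∈ ed, v ∈ A a))
    intro ed hed
    obtain ⟨hed1, hed2⟩ := Finset.mem_filter.1 hed
    obtain ⟨hed3, hed4⟩ := Finset.mem_filter.1 hed1
    induction ed with | _ i j =>
    simp only [Sym2.mem_iff, not_or] at hed4
    rw [Sym2.map_mk, Sym2.mk_isDiag_iff] at hed2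
    refine Finset.mem_biUnion.2 ⟨c i, hc i (Ne.symm hed4.1), Finset.mem_filter.2 ⟨hed3, ?_⟩⟩
    intro v hv
    rcases Sym2.mem_iff.1 hv with rfl | rfl
    · simp [hA, Ne.symm hed4.1]
    · simp [hA, Ne.symm hed4.2, hed2]
  have hmem : ∀ a ∈ S, a ∈ A a := fun a ha => by
    simp [hA, hcS a ha]; rintro rfl; exact hS ha
  have hcard : ∀ a ∈ S, (A a).card + 2 ≤ Fintype.card V := by
    intro a ha
    obtain ⟨b, hb, hba⟩ := Finset.exists_mem_ne (s := S) (by omega) a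
    have hsub : A a ⊆ (Finset.univ.erase u).erase b := by
      intro v hv
      simp only [hA, Finset.mem_filter, Finset.mem_erase, Finset.mem_univ, and_true] at hv ⊢
      refine ⟨?_, hv.1⟩
      rintro rfl
      exact hba ((hcS v hb).symm.trans hv.2)
    have := Finset.card_le_card hsub
    have hbu : b ≠ u := by rintro rfl; exact hS hb
    rw [Finset.card_erase_of_mem (by simp [hbu]), Finset.card_erase_of_mem (Finset.mem_univ _),
      Finset.card_univ] at this
    omega
  have hb : ∀ a ∈ S, insideCount G (A a) + 2 ≤ 2 * (A a).card := fun a ha =>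
    (insideCount_bound G hG (A a) ⟨a, hmem a ha⟩ (hcard a ha)).1
  -- some cluster is not a singleton, since there are fewer clusters than vertices
  obtain ⟨a, ha, hac⟩ : ∃ a ∈ S, 2 ≤ (A a).card := by
    by_contra! hcon
    have : ∑ a ∈ S, (A a).card ≤ ∑ a ∈ S, 1 :=
      Finset.sum_le_sum fun a ha => by have := hcon a ha; omega
    simp at this
    omega
  have hstrict : ∑ a ∈ S, (insideCount G (A a) + 2) < ∑ a ∈ S, 2 * (A a).card :=
    Finset.sum_lt_sum hb ⟨a, ha, by
      have := (insideCount_bound G hG (A a) ⟨a, hmem a ha⟩ (hcard a ha)).2 hac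
      omega⟩
  rw [Finset.sum_add_distrib, ← Finset.mul_sum, Finset.sum_const, smul_eq_mul] at hstrict
  omega

/-! ### Greedy clustering -/

/-- The clustering obtained from `c` by merging the cluster of `j` into the cluster of `i`. -/
noncomputable def merge (c : V → V) (i j : V) (v : V) : V := if c v = j then i else c v

lemma isDiag_merge (c : V → V) (i j : V) (ed : Sym2 V) :
    (ed.map (merge c i j)).IsDiag ↔ (ed.map c).IsDiag ∨ ed.map c = s(i, j) := by
  induction ed with | _ a b =>
  simp only [Sym2.map_mk, Sym2.mk_isDiag_iff, merge, Sym2.eq_iff]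
  by_cases ha : c a = j <;> by_cases hb : c b = j <;> simp [ha, hb]
  · constructor
    · intro h; right; exact h.symm
    · rintro (h | h)
      · exact absurd h.symm hb
      · exact h.symm

lemma not_isDiag_pair {i j : V} (hij : i ≠ j) : ¬ (s(i, j) : Sym2 V).IsDiag := by
  simpa using hij

/-- Merging two clusters makes exactly the edges between them inner. -/
lemma innerCount_merge [Fintype V] (G : SimpleGraph V) (u : V) (c : V → V) {i j : V}
    (hij : i ≠ j) : innerCount G u (merge c i j) =
      innerCount G u c + ((edgesOff G u).filter fun ed => ed.map c = s(i, j)).card := by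
  rw [innerCount, innerCount, ← Finset.card_union_of_disjoint, ← Finset.filter_or]
  · congr 1
    exact Finset.filter_congr fun ed _ => isDiag_merge c i j ed
  · rw [Finset.disjoint_filter]
    intro ed _ h1 h2
    rw [h2] at h1
    exact not_isDiag_pair hij h1

/-- Merging a closest pair of clusters lengthens each remaining edge by at most a factor `2`. -/
lemma outerProd_merge [Fintype V] (G : SimpleGraph V) (u : V) (x : V → R4) (c : V → V)
    {S : Finset V} (hc : ∀ v, v ≠ u → c v ∈ S) {i j : V} (hi : i ∈ S)
    (hij : i ≠ j) (hr : 0 < ‖x i - x j‖)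
    (hmin : ∀ a ∈ S, ∀ b ∈ S, a ≠ b → ‖x i - x j‖ ≤ ‖x a - x b‖) :
    outerProd G u x c ≤
      ((‖x i - x j‖ ^ 2)⁻¹) ^ ((edgesOff G u).filter fun ed => ed.map c = s(i, j)).card *
        (4 ^ (edgesOff G u).card * outerProd G u x (merge c i j)) := by
  have hsplit : (edgesOff G u).filter (fun ed => ¬ (ed.map c).IsDiag) =
      (edgesOff G u).filter (fun ed => ed.map c = s(i, j)) ∪
        (edgesOff G u).filter (fun ed => ¬ (ed.map (merge c i j)).IsDiag) := by
    rw [← Finset.filter_or]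
    refine Finset.filter_congr fun ed _ => ?_
    rw [isDiag_merge c i j]
    by_cases h : ed.map c = s(i, j)
    · simp [h, hij]
    · simp [h]
  have hdisj : Disjoint ((edgesOff G u).filter (fun ed => ed.map c = s(i, j)))
      ((edgesOff G u).filter (fun ed => ¬ (ed.map (merge c i j)).IsDiag)) := by
    rw [Finset.disjoint_filter]
    intro ed _ h1 h2
    exact h2 ((isDiag_merge c i j ed).2 (Or.inr h1))
  rw [outerProd, hsplit, Finset.prod_union hdisj]
  refine mul_le_mul (le_of_eq ?_) ?_ (Finset.prod_nonneg fun _ _ => by positivity) (by positivity)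
  · rw [← Finset.prod_const]
    refine Finset.prod_congr rfl fun ed hed => ?_
    rw [(Finset.mem_filter.1 hed).2, edgeLen_mk]
  · have h1 : ∀ ed ∈ (edgesOff G u).filter (fun ed => ¬ (ed.map (merge c i j)).IsDiag),
        (edgeLen x (ed.map c) ^ 2)⁻¹ ≤ 4 * (edgeLen x (ed.map (merge c i j)) ^ 2)⁻¹ := by
      intro ed hed
      obtain ⟨hed1, hed2⟩ := Finset.mem_filter.1 hed
      have hed3 := (Finset.mem_filter.1 hed1).2
      have hed0 := hed2
      rw [isDiag_merge c i j, not_or] at hed0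
      induction ed with | _ a b =>
      simp only [Sym2.mem_iff, not_or] at hed3
      simp only [Sym2.map_mk, Sym2.mk_isDiag_iff, edgeLen_mk] at hed0 hed2 ⊢
      have hca := hc a (Ne.symm hed3.1)
      have hcb := hc b (Ne.symm hed3.2)
      have hmab := hmin _ hca _ hcb hed0.1
      have hma : merge c i j a ∈ S := by unfold merge; split_ifs <;> assumption
      have hmb : merge c i j b ∈ S := by unfold merge; split_ifs <;> assumption
      have hpos := hr.trans_le (hmin _ hma _ hmb hed2)
      have hpos2 := hr.trans_le hmab
      have hle : ‖x (merge c i j a) - x (merge c i j b)‖ ≤ 2 * ‖x (c a) - x (c b)‖ := by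
        unfold merge
        split_ifs with h1 h2 h2
        · simp
        · rw [h1] at hmab ⊢
          have := norm_sub_le_norm_sub_add_norm_sub (x i) (x j) (x (c b))
          linarith
        · rw [h2] at hmab ⊢
          have := norm_sub_le_norm_sub_add_norm_sub (x (c a)) (x j) (x i)
          rw [norm_sub_rev (x j) (x i)] at this
          linarith
        · linarith [norm_nonneg (x (c a) - x (c b))]
      rw [← div_eq_mul_inv, inv_eq_one_div, div_le_div_iff₀ (by positivity) (by positivity)]
      nlinarith
    refine (Finset.prod_le_prod (fun _ _ => by positivity) h1).trans ?_
    rw [Finset.prod_mul_distrib, Finset.prod_const]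
    refine mul_le_mul_of_nonneg_right ?_ (Finset.prod_nonneg fun _ _ => by positivity)
    exact pow_le_pow_right₀ (by norm_num) (Finset.card_filter_le _ _)

lemma outerProd_nonneg [Fintype V] (G : SimpleGraph V) (u : V) (x : V → R4) (c : V → V) :
    0 ≤ outerProd G u x c := Finset.prod_nonneg fun _ _ => by positivity

/-- The bookkeeping of exponents when a pair of clusters at distance `r`, joined by `M` edges, is
merged. -/
lemma greedy_arith_merge {r K O O' Q R : ℝ} {M D D' m : ℕ} (hr0 : 0 < r) (hK : 0 ≤ K)
    (hQ0 : 0 ≤ Q) (hDM : D' + M = D + 2) (hout : O' ≤ ((r ^ 2)⁻¹) ^ M * (K * O))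
    (hbound : O * (r ^ 2) ^ D' * R ^ 2 * Q ≤ K ^ m * r ^ 2) :
    O' * (r ^ 2) ^ D * R ^ 2 * (r ^ 4 * Q) ≤ K ^ (m + 1) * r ^ 2 := by
  have hpow : ((r ^ 2)⁻¹) ^ M * ((r ^ 2) ^ D * r ^ 4) = (r ^ 2) ^ D' := by
    have : (r ^ 2) ^ D * r ^ 4 = (r ^ 2) ^ (D' + M) := by rw [hDM, pow_add]; ring
    rw [this, pow_add, inv_pow, mul_comm ((r ^ 2) ^ D'),
      inv_mul_cancel_left₀ (by positivity)]
  calc O' * (r ^ 2) ^ D * R ^ 2 * (r ^ 4 * Q)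
      = O' * ((r ^ 2) ^ D * R ^ 2 * (r ^ 4 * Q)) := by ring
    _ ≤ (((r ^ 2)⁻¹) ^ M * (K * O)) * ((r ^ 2) ^ D * R ^ 2 * (r ^ 4 * Q)) :=
        mul_le_mul_of_nonneg_right hout (by positivity)
    _ = K * (O * (((r ^ 2)⁻¹) ^ M * ((r ^ 2) ^ D * r ^ 4)) * R ^ 2 * Q) := by
        generalize ((r ^ 2)⁻¹) ^ M = a
        generalize (r ^ 2) ^ D = b
        ring
    _ ≤ K * (K ^ m * r ^ 2) := by
        rw [hpow]
        exact mul_le_mul_of_nonneg_left hbound hK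
    _ = K ^ (m + 1) * r ^ 2 := by ring

/-- A bound at scale `r` with a positive excess exponent gives the bound at a smaller scale. -/
lemma greedy_arith_rescale {ρ r O P R B : ℝ} {D : ℕ} (hρ : 0 ≤ ρ) (hρr : ρ ≤ r) (hO0 : 0 ≤ O)
    (hP0 : 0 ≤ P) (hr0 : 0 < r) (hmain : O * (r ^ 2) ^ (D + 1) * R ^ 2 * P ≤ B * r ^ 2) :
    O * (ρ ^ 2) ^ (D + 1) * R ^ 2 * P ≤ B * ρ ^ 2 := by
  have hr2 : 0 < r ^ 2 := by positivity
  have h2 : O * (r ^ 2) ^ D * R ^ 2 * P ≤ B := by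
    refine le_of_mul_le_mul_right (le_trans (le_of_eq ?_) hmain) hr2
    rw [pow_succ]
    ring
  have h3 : (ρ ^ 2) ^ D ≤ (r ^ 2) ^ D := by gcongr
  calc O * (ρ ^ 2) ^ (D + 1) * R ^ 2 * P
      = O * (ρ ^ 2) ^ D * R ^ 2 * P * ρ ^ 2 := by rw [pow_succ]; ring
    _ ≤ O * (r ^ 2) ^ D * R ^ 2 * P * ρ ^ 2 := by gcongr
    _ ≤ B * ρ ^ 2 := by gcongr

/-- Greedy clustering. The set `S` holds the representatives of the current clusters, all at mutual
distance at least `ρ`, and `D` is the excess by which the inner edges fall short of the critical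
number. Merging closest pairs until one cluster is left yields parents `p v` (the representative
into which `v` is merged, of larger rank `h`), with all merging distances between `ρ` and `R`. The
edges are estimated by the merging distances. A positive excess, which primitivity supplies after
the first merger, allows a passage from each scale to the next smaller one, and the resulting gain
telescopes to `ρ² / R²`. -/
lemma greedy_bound [Fintype V] (G : SimpleGraph V) (hG : CompletedPrimitive G) {u w z : V}
    (x : V → R4) (m : ℕ) :
    ∀ (S : Finset V) (c : V → V) (D : ℕ) (ρ : ℝ), S.card = m + 1 → u ∉ S → w ∈ S →
      S.card + 1 ≤ Fintype.card V →
      (∀ v, v ≠ u → c v ∈ S) → (∀ a ∈ S, c a = a) → 0 < ρ →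
      (∀ a ∈ S, ∀ b ∈ S, a ≠ b → ρ ≤ ‖x a - x b‖) →
      innerCount G u c + D + 2 * S.card + 2 = 2 * Fintype.card V →
      (1 ≤ D ∨ S.card = 1 ∨ ∃ a ∈ S, ∃ b ∈ S, a ≠ b ∧ ‖x a - x b‖ = ρ) →
      ∃ (p : V → V) (h : V → ℕ) (R : ℝ), ρ ≤ R ∧
        (∀ v ∈ S, v ≠ w → p v ∈ S ∧ h v < h (p v) ∧ ρ ≤ ‖x v - x (p v)‖ ∧
          ‖x v - x (p v)‖ ≤ R) ∧
        (z ∈ S → z ≠ w → p z = w) ∧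
        outerProd G u x c * (ρ ^ 2) ^ D * R ^ 2 * ∏ v ∈ S.erase w, ‖x v - x (p v)‖ ^ 4
          ≤ (4 ^ (edgesOff G u).card) ^ m * ρ ^ 2 := by
  induction m with
  | zero =>
    intro S c D ρ hS hu hw _ hc hcS hρ _ hD _
    obtain ⟨a, rfl⟩ := Finset.card_eq_one.1 hS
    obtain rfl := Finset.mem_singleton.1 hw
    have hall : ∀ ed ∈ edgesOff G u, (ed.map c).IsDiag := by
      intro ed hed
      have hed3 := (Finset.mem_filter.1 hed).2
      induction ed with | _ a b =>
      simp only [Sym2.mem_iff, not_or] at hed3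
      have h1 := Finset.mem_singleton.1 (hc a (Ne.symm hed3.1))
      have h2 := Finset.mem_singleton.1 (hc b (Ne.symm hed3.2))
      simp [h1, h2]
    have hin : innerCount G u c = (edgesOff G u).card := by
      rw [innerCount, Finset.filter_true_of_mem hall]
    have hcard := card_edgesOff G hG.1 u
    have hD0 : D = 0 := by rw [hin] at hD; simp at hD; omega
    have hout : outerProd G u x c = 1 := by
      rw [outerProd, Finset.filter_false_of_mem (fun ed hed => not_not.2 (hall ed hed)),
        Finset.prod_empty]
    refine ⟨id, fun _ => 0, ρ, le_rfl, ?_, ?_, ?_⟩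
    · intro v hv hvw
      exact absurd (Finset.mem_singleton.1 hv) hvw
    · intro hz hzw
      exact absurd (Finset.mem_singleton.1 hz) hzw
    · simp [hD0, hout]
  | succ m ih =>
    intro S c D ρ hS hu hw hSV hc hcS hρ hρS hD hcond
    -- a closest pair, oriented so that `w` is never absorbed and `z` is absorbed only by `w`
    obtain ⟨i, j, hi, hj, hij, hjw, hjz, hmin⟩ : ∃ i j, i ∈ S ∧ j ∈ S ∧ i ≠ j ∧ j ≠ w ∧
        (j = z → i = w) ∧ ∀ a ∈ S, ∀ b ∈ S, a ≠ b → ‖x i - x j‖ ≤ ‖x a - x b‖ := by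
      obtain ⟨b, hb, hbw⟩ := Finset.exists_mem_ne (s := S) (by omega) w
      obtain ⟨⟨i, j⟩, hmem, hmin⟩ := Finset.exists_min_image S.offDiag
        (fun q => ‖x q.1 - x q.2‖) ⟨(b, w), Finset.mem_offDiag.2 ⟨hb, hw, hbw⟩⟩
      obtain ⟨hi, hj, hij⟩ := Finset.mem_offDiag.1 hmem
      have hmin1 : ∀ a ∈ S, ∀ b ∈ S, a ≠ b → ‖x i - x j‖ ≤ ‖x a - x b‖ := fun a ha b hb hab =>
        hmin (a, b) (Finset.mem_offDiag.2 ⟨ha, hb, hab⟩)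
      simp only at hi hj hij
      by_cases h1 : j = w ∨ (j = z ∧ i ≠ w)
      · refine ⟨j, i, hj, hi, hij.symm, ?_, ?_, fun a ha b hb hab => ?_⟩
        · rintro rfl
          rcases h1 with h1 | h1
          · exact hij h1.symm
          · exact h1.2 rfl
        · rintro rfl
          rcases h1 with h1 | h1
          · exact h1
          · exact absurd h1.1.symm hij
        · rw [norm_sub_rev]; exact hmin1 a ha b hb hab
      · push Not at h1
        exact ⟨i, j, hi, hj, hij, h1.1, h1.2, hmin1⟩
    set r := ‖x i - x j‖ with hr
    have hρr : ρ ≤ r := hρS i hi j hj hij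
    have hr0 : 0 < r := hρ.trans_le hρr
    have hS'card : (S.erase j).card = m + 1 := by rw [Finset.card_erase_of_mem hj]; omega
    have hiS' : i ∈ S.erase j := Finset.mem_erase.2 ⟨hij, hi⟩
    have hu' : u ∉ S.erase j := fun h => hu (Finset.mem_of_mem_erase h)
    have hc' : ∀ v, v ≠ u → merge c i j v ∈ S.erase j := by
      intro v hv
      unfold merge
      split_ifs with h
      · exact hiS'
      · exact Finset.mem_erase.2 ⟨h, hc v hv⟩
    have hcS' : ∀ a ∈ S.erase j, merge c i j a = a := by
      intro a ha
      obtain ⟨h1, h2⟩ := Finset.mem_erase.1 ha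
      simp [merge, hcS a h2, h1]
    set M := ((edgesOff G u).filter fun ed => ed.map c = s(i, j)).card with hM
    have hin : innerCount G u (merge c i j) = innerCount G u c + M := innerCount_merge G u c hij
    have hcardE := card_edgesOff G hG.1 u
    have hinle : innerCount G u (merge c i j) ≤ (edgesOff G u).card := Finset.card_filter_le _ _
    obtain ⟨D', hD', hD'1⟩ : ∃ D', innerCount G u (merge c i j) + D' + 2 * (S.erase j).card + 2
        = 2 * Fintype.card V ∧ (1 ≤ D' ∨ (S.erase j).card = 1) := by
      by_cases h1 : (S.erase j).card = 1
      · refine ⟨2 * Fintype.card V - 2 - 2 * (S.erase j).card - innerCount G u (merge c i j),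
          by omega, Or.inr h1⟩
      · have := innerCount_bound G hG hu' (by omega) (by omega) hc' hcS'
        refine ⟨2 * Fintype.card V - 2 - 2 * (S.erase j).card - innerCount G u (merge c i j),
          by omega, Or.inl (by omega)⟩
    obtain ⟨p, h, R, hrR, hp, hpz, hbound⟩ := ih (S.erase j) (merge c i j) D' r hS'card hu'
      (Finset.mem_erase.2 ⟨hjw.symm, hw⟩) (by omega) hc' hcS' hr0
      (fun a ha b hb hab => hmin a (Finset.mem_of_mem_erase ha) b (Finset.mem_of_mem_erase hb) hab)
      hD' (hD'1.imp_right Or.inl)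
    have hDM : D' + M = D + 2 := by omega
    have hout := outerProd_merge G u x c hc hi hij hr0 hmin
    rw [← hM, ← hr] at hout
    have hpv : ∀ v, v ≠ j → Function.update p j i v = p v := fun v hv =>
      Function.update_of_ne hv _ _
    have hprod : ∏ v ∈ S.erase w, ‖x v - x (Function.update p j i v)‖ ^ 4
        = r ^ 4 * ∏ v ∈ (S.erase j).erase w, ‖x v - x (p v)‖ ^ 4 := by
      rw [← Finset.mul_prod_erase (S.erase w) _ (Finset.mem_erase.2 ⟨hjw, hj⟩),
        Function.update_self, norm_sub_rev, ← hr, Finset.erase_right_comm]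
      congr 1
      refine Finset.prod_congr rfl fun v hv => ?_
      rw [hpv v (Finset.ne_of_mem_erase (Finset.mem_of_mem_erase hv))]
    -- the bound at scale `r`
    have hmain : outerProd G u x c * (r ^ 2) ^ D * R ^ 2 *
        ∏ v ∈ S.erase w, ‖x v - x (Function.update p j i v)‖ ^ 4
          ≤ (4 ^ (edgesOff G u).card) ^ (m + 1) * r ^ 2 := by
      rw [hprod]
      exact greedy_arith_merge hr0 (by positivity)
        (Finset.prod_nonneg fun _ _ => by positivity) hDM hout hbound
    refine ⟨Function.update p j i, Function.update (fun v => h v + 1) j 0, R, hρr.trans hrR,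
      ?_, ?_, ?_⟩
    · intro v hv hvw
      by_cases hvj : v = j
      · subst hvj
        rw [Function.update_self, Function.update_self, Function.update_of_ne hij,
          norm_sub_rev, ← hr]
        exact ⟨hi, by omega, hρr, hrR⟩
      · obtain ⟨h1, h2, h3, h4⟩ := hp v (Finset.mem_erase.2 ⟨hvj, hv⟩) hvw
        rw [hpv v hvj, Function.update_of_ne hvj,
          Function.update_of_ne (Finset.ne_of_mem_erase h1)]
        exact ⟨Finset.mem_of_mem_erase h1, by omega, hρr.trans h3, h4⟩
    · intro hz hzw
      by_cases hzj : z = j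
      · subst hzj
        rw [Function.update_self, hjz rfl]
      · rw [hpv z hzj]
        exact hpz (Finset.mem_erase.2 ⟨hzj, hz⟩) hzw
    · rcases hcond with h1 | h1 | ⟨a, ha, b, hb, hab, hab2⟩
      · obtain ⟨D0, rfl⟩ := Nat.exists_eq_add_of_le' h1
        exact greedy_arith_rescale hρ.le hρr (outerProd_nonneg G u x c)
          (Finset.prod_nonneg fun _ _ => by positivity) hr0 hmain
      · omega
      · have : r = ρ := le_antisymm (hab2 ▸ hmin a ha b hb hab) hρr
        rwa [this] at hmain

/-! ### Domination by trees and finiteness -/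

/-- The function `t ↦ t⁻⁴ min(t, t⁻¹) ^ ε`; composed with the norm of `ℝ⁴` it is integrable, the
last factor providing convergence both at the origin and at infinity. -/
noncomputable def treeKer (ε t : ℝ) : ℝ := (t ^ 4)⁻¹ * (min t t⁻¹) ^ ε

lemma treeKer_nonneg (ε : ℝ) {t : ℝ} (ht : 0 ≤ t) : 0 ≤ treeKer ε t := by
  have : 0 ≤ min t t⁻¹ := le_min ht (inv_nonneg.2 ht)
  unfold treeKer
  positivity

lemma measurable_treeKer (ε : ℝ) : Measurable (treeKer ε) := by
  unfold treeKer
  fun_prop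

lemma lintegral_treeKer_ne_top {ε : ℝ} (hε : 0 < ε) :
    ∫⁻ t : R4, ENNReal.ofReal (treeKer ε ‖t‖) ≠ ⊤ := by
  have hinteg : Integrable (fun t : R4 => treeKer ε ‖t‖) := by
    rw [integrable_fun_norm_addHaar volume (f := treeKer ε), finrank_euclideanSpace_fin,
      ← Set.Ioc_union_Ioi_eq_Ioi zero_le_one, integrableOn_union]
    constructor
    · have h1 := (intervalIntegral.intervalIntegrable_rpow' (a := 0) (b := 1)
        (r := ε - 1) (by linarith)).1
      refine h1.congr_fun (fun t ht => ?_) measurableSet_Ioc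
      have ht0 : 0 < t := ht.1
      have hmin : min t t⁻¹ = t := min_eq_left (ht.2.trans ((one_le_inv₀ ht0).2 ht.2))
      simp only [treeKer, hmin, smul_eq_mul]
      rw [Real.rpow_sub_one ht0.ne']
      field_simp
    · have h1 := integrableOn_Ioi_rpow_of_lt (a := -ε - 1) (c := 1) (by linarith) one_pos
      refine h1.congr_fun (fun t ht => ?_) measurableSet_Ioi
      have ht1 : (1 : ℝ) < t := ht
      have ht0 : 0 < t := one_pos.trans ht1
      have hmin : min t t⁻¹ = t⁻¹ := min_eq_right ((inv_le_one_of_one_le₀ ht1.le).trans ht1.le)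
      simp only [treeKer, hmin, smul_eq_mul]
      rw [Real.rpow_sub_one ht0.ne', Real.inv_rpow ht0.le, ← Real.rpow_neg ht0.le]
      field_simp
  exact ((hasFiniteIntegral_iff_ofReal
    (Filter.Eventually.of_forall fun t => treeKer_nonneg ε (norm_nonneg _))).1 hinteg.2).ne

/-- If each vertex `v` of `s` has a parent `p v` of larger rank, the vertices of `s` can be
integrated out in order of increasing rank, each contributing the same factor. -/
lemma lmarginal_tree (g : R4 → ℝ≥0∞) (hg : Measurable g) (hfin : ∫⁻ t, g t ≠ ⊤) (p : V → V)
    (h : V → ℕ) (n : ℕ) : ∀ s : Finset V, s.card = n → (∀ v ∈ s, h v < h (p v)) →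
      ∀ y, (∫⋯∫⁻_s, fun x : V → R4 => ∏ v ∈ s, g (x v - x (p v))) y = (∫⁻ t, g t) ^ n := by
  induction n with
  | zero =>
    intro s hs _ y
    obtain rfl := Finset.card_eq_zero.1 hs
    simp
  | succ n ih =>
    intro s hs hp y
    obtain ⟨j, hj, hmin⟩ := Finset.exists_min_image s h (Finset.card_pos.1 (by omega))
    have hpj : p j ≠ j := fun h0 => by have := hp j hj; rw [h0] at this; omega
    have hm : Measurable fun x : V → R4 => ∏ v ∈ s, g (x v - x (p v)) :=
      Finset.measurable_prod _ fun v _ => hg.comp (by fun_prop)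
    have hstep : ∀ x : V → R4, ∫⁻ t, ∏ v ∈ s, g (Function.update x j t v -
        Function.update x j t (p v)) =
          (∫⁻ t, g t) * ∏ v ∈ s.erase j, g (x v - x (p v)) := by
      intro x
      have : ∀ t, ∏ v ∈ s, g (Function.update x j t v - Function.update x j t (p v))
          = (∏ v ∈ s.erase j, g (x v - x (p v))) * g (t - x (p j)) := by
        intro t
        rw [← Finset.mul_prod_erase s _ hj, Function.update_self, Function.update_of_ne hpj,
          mul_comm]
        congr 1
        refine Finset.prod_congr rfl fun v hv => ?_
        obtain ⟨h1, h2⟩ := Finset.mem_erase.1 hv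
        have hpv : p v ≠ j := fun h0 => by
          have := hp v h2; have := hmin v h2; rw [h0] at *; omega
        rw [Function.update_of_ne h1, Function.update_of_ne hpv]
      simp_rw [this]
      rw [lintegral_const_mul _ (f := fun t => g (t - x (p j)))
        (hg.comp (measurable_id.sub_const _)), lintegral_sub_right_eq_self, mul_comm]
    rw [lmarginal_erase' _ hm hj]
    simp_rw [hstep]
    rw [lmarginal, lintegral_const_mul' _ _ hfin]
    have := ih (s.erase j) (by rw [Finset.card_erase_of_mem hj]; omega)
      (fun v hv => hp v (Finset.mem_of_mem_erase hv)) y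
    rw [lmarginal] at this
    rw [this, pow_succ, mul_comm]

lemma innerCount_id [Fintype V] (G : SimpleGraph V) (u : V) : innerCount G u id = 0 := by
  rw [innerCount, Finset.card_eq_zero, Finset.filter_eq_empty_iff]
  intro ed hed
  have h1 := (Finset.mem_filter.1 hed).1
  rw [Sym2.map_id]
  exact G.not_isDiag_of_mem_edgeFinset h1

lemma outerProd_id [Fintype V] (G : SimpleGraph V) (u : V) (x : V → R4) :
    outerProd G u x id = kern G u x := by
  rw [outerProd, kern, Finset.filter_true_of_mem]
  · simp
  · intro ed hed
    rw [Sym2.map_id]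
    exact G.not_isDiag_of_mem_edgeFinset (Finset.mem_filter.1 hed).1

/-- Pointwise, the integrand is dominated by the kernel of some rooted forest on the integrated
vertices. -/
lemma kern_le_tree [Fintype V] (G : SimpleGraph V) (hG : CompletedPrimitive G)
    (hcard : 5 ≤ Fintype.card V) {u w z : V} (huw : u ≠ w) (huz : u ≠ z) (hwz : w ≠ z) :
    ∃ K : ℝ, 0 ≤ K ∧ ∀ x : V → R4, (∀ a b, a ≠ u → b ≠ u → a ≠ b → x a ≠ x b) →
      ‖x z - x w‖ = 1 → ∃ p : V → V,
        (∃ h : V → ℕ, ∀ v ∈ ({u, w, z}ᶜ : Finset V), h v < h (p v)) ∧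
        kern G u x ≤ K * ∏ v ∈ ({u, w, z}ᶜ : Finset V),
          treeKer (2 / ((({u, w, z}ᶜ : Finset V).card : ℕ) : ℝ)) ‖x v - x (p v)‖ := by
  have hK0 : (0 : ℝ) ≤ (4 ^ (edgesOff G u).card) ^ (Fintype.card V - 2) := by positivity
  refine ⟨_, hK0, fun x hx hzw => ?_⟩
  set S : Finset V := Finset.univ.erase u with hS
  have hScard : S.card = (Fintype.card V - 2) + 1 := by
    rw [hS, Finset.card_erase_of_mem (Finset.mem_univ _), Finset.card_univ]; omega
  have hwS : w ∈ S := by simp [hS, huw.symm]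
  have hzS : z ∈ S := by simp [hS, huz.symm]
  obtain ⟨⟨a, b⟩, hmem, hmin⟩ := Finset.exists_min_image S.offDiag
    (fun q => ‖x q.1 - x q.2‖) ⟨(z, w), Finset.mem_offDiag.2 ⟨hzS, hwS, hwz.symm⟩⟩
  obtain ⟨ha, hb, hab⟩ := Finset.mem_offDiag.1 hmem
  simp only at ha hb hab
  set ρ := ‖x a - x b‖ with hρ
  have hρ0 : 0 < ρ := norm_pos_iff.2 (sub_ne_zero.2
    (hx a b (Finset.ne_of_mem_erase ha) (Finset.ne_of_mem_erase hb) hab))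
  obtain ⟨p, h, R, hρR, hp, hpz, hbound⟩ := greedy_bound G hG (u := u) (w := w) (z := z) x
    (Fintype.card V - 2) S id 0 ρ hScard (by simp [hS]) hwS (by omega)
    (fun v hv => by simp [hS, hv]) (fun _ _ => rfl) hρ0
    (fun a' ha' b' hb' hab' => hmin (a', b') (Finset.mem_offDiag.2 ⟨ha', hb', hab'⟩))
    (by rw [innerCount_id]; omega) (Or.inr (Or.inr ⟨a, ha, b, hb, hab, rfl⟩))
  generalize ((4 : ℝ) ^ (edgesOff G u).card) ^ (Fintype.card V - 2) = K at hbound hK0 ⊢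
  have hpz' := hpz hzS hwz.symm
  have hsub : ∀ v ∈ ({u, w, z}ᶜ : Finset V), v ∈ S ∧ v ≠ w := by
    intro v hv
    simp only [Finset.mem_compl, Finset.mem_insert, Finset.mem_singleton, not_or] at hv
    simp [hS, hv.1, hv.2.1]
  refine ⟨p, ⟨h, fun v hv => (hp v (hsub v hv).1 (hsub v hv).2).2.1⟩, ?_⟩
  set s : Finset V := {u, w, z}ᶜ with hs
  have hscard : s.card = Fintype.card V - 3 := by
    rw [hs, Finset.card_compl, Finset.card_eq_three.2 ⟨u, w, z, huw, huz, hwz, rfl⟩]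
  have hn0 : (0 : ℝ) < (s.card : ℝ) := by
    rw [hscard]; exact_mod_cast (by omega : 0 < Fintype.card V - 3)
  have hzp := hp z hzS hwz.symm
  rw [hpz', hzw] at hzp
  have hR0 : 0 < R := hρ0.trans_le hρR
  have hSe : S.erase w = insert z s := by
    ext v
    simp only [hS, hs, Finset.mem_erase, Finset.mem_univ, Finset.mem_insert, Finset.mem_compl,
      Finset.mem_singleton]
    by_cases h1 : v = z
    · subst h1; simp [hwz.symm, huz.symm]
    · simp [h1]; tauto
  rw [hSe, Finset.prod_insert (by simp [hs]), hpz', hzw, outerProd_id, one_pow, one_mul, pow_zero,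
    mul_one] at hbound
  have hr0 : ∀ v ∈ s, 0 < ‖x v - x (p v)‖ := fun v hv =>
    hρ0.trans_le (hp v (hsub v hv).1 (hsub v hv).2).2.2.1
  have hP0 : 0 < ∏ v ∈ s, ‖x v - x (p v)‖ ^ 4 := Finset.prod_pos fun v hv => by
    have := hr0 v hv; positivity
  have hq0 : 0 ≤ ρ / R := by positivity
  -- the gain `(ρ / R) ^ 2` is shared out equally among the integrated vertices; since the merging
  -- distance of `z` is `1`, one has `ρ ≤ 1 ≤ R`, which bounds `ρ / R` by each `min`
  have hpow : (ρ / R) ^ 2 ≤ ∏ v ∈ s,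
      (min ‖x v - x (p v)‖ ‖x v - x (p v)‖⁻¹) ^ (2 / (s.card : ℝ)) := by
    have h1 : (ρ / R) ^ 2 = ∏ v ∈ s, (ρ / R) ^ (2 / (s.card : ℝ)) := by
      rw [Finset.prod_const, ← Real.rpow_mul_natCast hq0, div_mul_cancel₀ _ hn0.ne']
      norm_cast
    rw [h1]
    refine Finset.prod_le_prod (fun _ _ => by positivity) fun v hv => ?_
    obtain ⟨-, -, h3, h4⟩ := hp v (hsub v hv).1 (hsub v hv).2
    have hv0 := hr0 v hv
    refine Real.rpow_le_rpow hq0 (le_min ?_ ?_) (by positivity)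
    · rw [div_le_iff₀ hR0]
      nlinarith
    · rw [div_le_iff₀ hR0, ← div_eq_inv_mul, le_div_iff₀ hv0]
      nlinarith
  simp only [treeKer]
  rw [Finset.prod_mul_distrib, Finset.prod_inv_distrib]
  set P := ∏ v ∈ s, ‖x v - x (p v)‖ ^ 4 with hP
  calc kern G u x ≤ K * (P⁻¹ * (ρ / R) ^ 2) := by
        rw [div_pow, ← mul_div_assoc, ← mul_div_assoc, le_div_iff₀ (by positivity), mul_comm P⁻¹,
          ← mul_assoc, ← div_eq_mul_inv, le_div_iff₀ hP0]
        exact hbound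
    _ ≤ _ := mul_le_mul_of_nonneg_left (mul_le_mul_of_nonneg_left hpow (inv_nonneg.2 hP0.le)) hK0

/-- There are finitely many parent maps, and for each one the dominating kernel has a finite
integral. -/
theorem posE_lt_top [Fintype V] (G : SimpleGraph V) (hG : CompletedPrimitive G)
    (hcard : 5 ≤ Fintype.card V) {u w z : V} (huw : u ≠ w) (huz : u ≠ z) (hwz : w ≠ z)
    {e : R4} (he : ‖e‖ = 1) : posE G u w z e < ⊤ := by
  set s : Finset V := {u, w, z}ᶜ with hs
  set y : V → R4 := fun v => if v = z then e else 0 with hy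
  have hscard : s.card = Fintype.card V - 3 := by
    rw [hs, Finset.card_compl, Finset.card_eq_three.2 ⟨u, w, z, huw, huz, hwz, rfl⟩]
  set ε : ℝ := 2 / (s.card : ℝ) with hε
  have hε0 : 0 < ε := by
    have : (0 : ℝ) < (s.card : ℝ) := by
      rw [hscard]; exact_mod_cast (by omega : 0 < Fintype.card V - 3)
    positivity
  set g : R4 → ℝ≥0∞ := fun t => ENNReal.ofReal (treeKer ε ‖t‖) with hg
  have hgm : Measurable g := ((measurable_treeKer ε).comp measurable_norm).ennreal_ofReal
  have hgfin : ∫⁻ t, g t ≠ ⊤ := lintegral_treeKer_ne_top hε0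
  obtain ⟨K, hK0, hKb⟩ := kern_le_tree G hG hcard huw huz hwz
  rw [← hs, ← hε] at hKb
  set T : Finset (V → V) := Finset.univ.filter fun p => ∃ h : V → ℕ, ∀ v ∈ s, h v < h (p v) with hT
  have hae : ∀ᵐ t : s → R4, ∀ a b, a ≠ u → b ≠ u → a ≠ b →
      Function.updateFinset y s t a ≠ Function.updateFinset y s t b := by
    rw [ae_all_iff]; intro a
    rw [ae_all_iff]; intro b
    by_cases has : a ∈ s
    · by_cases hab : a = b
      · simp [hab]
      · filter_upwards [ae_updateFinset_ne s y has (Ne.symm hab)] with t ht _ _ _ using ht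
    by_cases hbs : b ∈ s
    · by_cases hab : a = b
      · simp [hab]
      · filter_upwards [ae_updateFinset_ne s y hbs hab] with t ht _ _ _ using ht.symm
    · refine Filter.Eventually.of_forall fun t ha hb hab => ?_
      have he0 : e ≠ 0 := by rintro rfl; simp at he
      have h1 : a = w ∨ a = z := by
        by_contra hcon; push Not at hcon; exact has (by simp [hs, ha, hcon.1, hcon.2])
      have h2 : b = w ∨ b = z := by
        by_contra hcon; push Not at hcon; exact hbs (by simp [hs, hb, hcon.1, hcon.2])
      simp only [Function.updateFinset, has, hbs, dif_neg, not_false_iff, hy]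
      rcases h1 with rfl | rfl <;> rcases h2 with rfl | rfl
      · exact absurd rfl hab
      · simpa [hwz] using he0.symm
      · simpa [hwz] using he0
      · exact absurd rfl hab
  have hws : w ∉ s := by simp [hs]
  have hzs : z ∉ s := by simp [hs]
  have hle : posE G u w z e ≤ ∫⁻ t : s → R4, ∑ p ∈ T, ENNReal.ofReal K *
      ∏ v ∈ s, g (Function.updateFinset y s t v - Function.updateFinset y s t (p v)) := by
    rw [posE, lmarginal]
    refine lintegral_mono_ae ?_
    filter_upwards [hae] with t ht
    obtain ⟨p, hp, hb⟩ := hKb (Function.updateFinset y s t) ht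
      (by simp [Function.updateFinset, hws, hzs, hy, hwz, he])
    have hpT : p ∈ T := Finset.mem_filter.2 ⟨Finset.mem_univ p, hp⟩
    refine le_trans ?_ (Finset.single_le_sum_of_canonicallyOrdered hpT)
    refine (ENNReal.ofReal_le_ofReal hb).trans (le_of_eq ?_)
    rw [ENNReal.ofReal_mul hK0, ENNReal.ofReal_prod_of_nonneg
      fun v _ => treeKer_nonneg _ (norm_nonneg _)]
  refine hle.trans_lt ?_
  rw [lintegral_finsetSum]
  · refine ENNReal.sum_lt_top.2 fun p hp => ?_
    obtain ⟨h, hh⟩ := (Finset.mem_filter.1 hp).2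
    rw [lintegral_const_mul' _ _ ENNReal.ofReal_ne_top]
    refine ENNReal.mul_lt_top ENNReal.ofReal_lt_top ?_
    have := lmarginal_tree g hgm hgfin p h s.card s rfl hh y
    rw [lmarginal] at this
    rw [volume_pi, this]
    exact ENNReal.pow_lt_top hgfin.lt_top
  · intro p _
    refine Measurable.const_mul (Finset.measurable_prod _ fun v _ => hgm.comp ?_) _
    have hu : Measurable fun t : s → R4 => Function.updateFinset y s t :=
      measurable_updateFinset
    exact ((measurable_pi_apply v).comp hu).sub ((measurable_pi_apply (p v)).comp hu)

lemma measurable_periodIntegrand [Fintype V] (G : SimpleGraph V) (u w z : V) (e : R4) :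
    Measurable (periodIntegrand G u w z e) := by
  have h1 : periodIntegrand G u w z e = fun x => kern G u (extendPos u w z e x) :=
    funext fun x => periodIntegrand_eq_kern G u w z e x
  rw [h1]
  refine (measurable_kern G u).comp (measurable_pi_iff.2 fun v => ?_)
  unfold extendPos
  split_ifs
  · exact measurable_const
  · exact measurable_const
  · exact measurable_pi_apply _
  · exact measurable_const

lemma periodIntegrand_nonneg [Fintype V] (G : SimpleGraph V) (u w z : V) (e : R4)
    (x : {v : V // v ≠ u ∧ v ≠ w ∧ v ≠ z} → R4) : 0 ≤ periodIntegrand G u w z e x := by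
  rw [periodIntegrand_eq_kern]
  exact kern_nonneg G u _

end

/-- For a completed primitive graph on at least 5 vertices, the affine position-space
integral `I(u,w,z,e)` is finite (the integrand is integrable) for every choice of three
distinct vertices `u, w, z` and unit vector `e`, and its value is independent of all these
choices. -/
theorem positionIntegral_finite_and_independent {V : Type*} [Fintype V]
    (G : SimpleGraph V) (h : CompletedPrimitive G) (hcard : 5 ≤ Fintype.card V) :
    (∀ (u w z : V) (e : R4), u ≠ w → u ≠ z → w ≠ z → ‖e‖ = 1 →
      Integrable (periodIntegrand G u w z e)) ∧
    (∀ (u w z : V) (e : R4) (u' w' z' : V) (e' : R4),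
      u ≠ w → u ≠ z → w ≠ z → ‖e‖ = 1 →
      u' ≠ w' → u' ≠ z' → w' ≠ z' → ‖e'‖ = 1 →
      positionIntegral G u w z e = positionIntegral G u' w' z' e') := by
  constructor
  · intro u w z e huw huz hwz he
    refine ⟨(measurable_periodIntegrand G u w z e).aestronglyMeasurable, ?_⟩
    rw [hasFiniteIntegral_iff_ofReal
      (Filter.Eventually.of_forall (periodIntegrand_nonneg G u w z e)),
      lintegral_periodIntegrand G e hwz]
    exact posE_lt_top G h hcard huw huz hwz he
  · intro u w z e u' w' z' e' huw huz hwz he huw' huz' hwz' he'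
    have hpos : ∀ (u w z : V) (e : R4), w ≠ z →
        positionIntegral G u w z e = (posE G u w z e).toReal := by
      intro u w z e hwz
      rw [positionIntegral, integral_eq_lintegral_of_nonneg_ae
        (Filter.Eventually.of_forall (periodIntegrand_nonneg G u w z e))
        (measurable_periodIntegrand G u w z e).aestronglyMeasurable,
        lintegral_periodIntegrand G e hwz]
    rw [hpos u w z e hwz, hpos u' w' z' e' hwz',
      posE_independent G h.1 huw huz hwz he huw' huz' hwz' he']
end

section
/- (Schwinger trick / Feynman parametrization.) For every integer n ≥ 2 and all positive real numbers Q₁, Q₂, …, Q_n, one has ∫_{(0,∞)^{n−1}} (Q₁ + α₂Q₂ + ⋯ + α_nQ_n)^{−n} dα₂ ⋯ dα_n = 1 / ((n−1)! · Q₁ · Q₂ ⋯ Q_n). -/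
open scoped ENNReal

/-!
The integral is evaluated one variable at a time. For the induction the exponent has to be
decoupled from the number of variables: for `c > 0` and `q₁, …, q_m > 0`,
`∫_{(0,∞)^m} (c + ∑ αᵢ qᵢ)^{-(m+k+1)} dα = k! / ((m+k)! c^{k+1} ∏ qᵢ)` (`lintegral_orthant_pow`).
By Tonelli (`lintegral_orthant_succ`), the step from `m` to `m + 1` applies the induction hypothesis
with `c + x q₀` in place of `c` and `k + 1` in place of `k`, which leaves the elementary integral
`∫_0^∞ (c + x q)^{-(k+2)} dx = 1 / ((k+1) q c^{k+1})` (`lintegral_Ioi_affine_pow`).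
The claim is the case `k = 0`.
-/

open MeasureTheory Set Filter Topology

lemma lintegral_Ioi_affine_pow (c q : ℝ) (hc : 0 < c) (hq : 0 < q) (k : ℕ) :
    (∫⁻ x in Ioi (0 : ℝ), ENNReal.ofReal (((c + x * q) ^ (k + 2))⁻¹)) =
      ENNReal.ofReal (1 / ((k + 1 : ℝ) * q * c ^ (k + 1))) := by
  -- An antiderivative that vanishes at infinity.
  set g : ℝ → ℝ := fun x => -(((k + 1 : ℝ) * q)⁻¹ * ((c + x * q) ^ (k + 1))⁻¹) with hg
  have hpos : ∀ x ∈ Ici (0 : ℝ), 0 < c + x * q := fun x hx => by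
    have : 0 ≤ x := hx
    positivity
  have hderiv : ∀ x ∈ Ici (0 : ℝ), HasDerivAt g (((c + x * q) ^ (k + 2))⁻¹) x := by
    intro x hx
    have h0 := hpos x hx
    have h1 : HasDerivAt (fun x : ℝ => c + x * q) q x := by
      simpa using ((hasDerivAt_id x).mul_const q).const_add c
    have h2 := (((h1.fun_pow (k + 1)).fun_inv (by positivity)).const_mul
      (((k + 1 : ℝ) * q)⁻¹)).fun_neg
    refine h2.congr_deriv ?_
    have hk : (k + 1 : ℝ) ≠ 0 := by positivity
    rw [Nat.add_sub_cancel]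
    generalize c + x * q = y at h0
    push_cast
    field_simp
    ring
  have hnn : ∀ x ∈ Ioi (0 : ℝ), 0 ≤ ((c + x * q) ^ (k + 2))⁻¹ := fun x hx => by
    have := hpos x (Ioi_subset_Ici_self hx)
    positivity
  have hlim : Tendsto g atTop (𝓝 0) := by
    have h1 : Tendsto (fun x : ℝ => c + x * q) atTop atTop :=
      tendsto_atTop_add_const_left _ _ (tendsto_id.atTop_mul_const hq)
    have h2 := (tendsto_pow_atTop (α := ℝ) (Nat.succ_ne_zero k)).comp h1
    have h3 := ((tendsto_inv_atTop_zero.comp h2).const_mul (((k + 1 : ℝ) * q)⁻¹)).neg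
    simpa [hg, Function.comp_def] using h3
  rw [← ofReal_integral_eq_lintegral_ofReal (integrableOn_Ioi_deriv_of_nonneg' hderiv hnn hlim)
    ((ae_restrict_iff' measurableSet_Ioi).2 (ae_of_all _ hnn)),
    integral_Ioi_of_hasDerivAt_of_nonneg' hderiv hnn hlim]
  congr 1
  simp only [hg]
  simp
  ring

/-- Tonelli on the positive orthant, with the first coordinate split off. -/
lemma lintegral_orthant_succ (m : ℕ) (f : (Fin (m + 1) → ℝ) → ℝ≥0∞) (hf : Measurable f) :
    (∫⁻ α in {α : Fin (m + 1) → ℝ | ∀ i, 0 < α i}, f α) =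
      ∫⁻ x in Ioi (0 : ℝ), ∫⁻ β in {β : Fin m → ℝ | ∀ i, 0 < β i}, f (Fin.cons x β) := by
  let e := (MeasurableEquiv.piFinSuccAbove (fun _ : Fin (m + 1) => ℝ) 0).symm
  have he : MeasurePreserving e :=
    (volume_preserving_piFinSuccAbove (fun _ : Fin (m + 1) => ℝ) 0).symm _
  have hcons : ∀ p : ℝ × (Fin m → ℝ), e p = Fin.cons p.1 p.2 := fun p => by
    simp [e, MeasurableEquiv.piFinSuccAbove, Fin.insertNthEquiv]
  have hpre : e ⁻¹' {α : Fin (m + 1) → ℝ | ∀ i, 0 < α i} =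
      Ioi (0 : ℝ) ×ˢ {β : Fin m → ℝ | ∀ i, 0 < β i} := by
    ext p
    simp [hcons, Fin.forall_fin_succ]
  rw [← he.setLIntegral_comp_preimage_emb e.measurableEmbedding, hpre, Measure.volume_eq_prod,
    ← Measure.prod_restrict, lintegral_prod (fun p => f (e p)) (hf.comp e.measurable).aemeasurable]
  simp only [hcons]

/-- The Schwinger integral with the exponent `m + k + 1` decoupled from the dimension `m`. -/
lemma lintegral_orthant_pow (m : ℕ) : ∀ (k : ℕ) (c : ℝ) (q : Fin m → ℝ), 0 < c → (∀ i, 0 < q i) →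
    (∫⁻ α in {α : Fin m → ℝ | ∀ i, 0 < α i},
        ENNReal.ofReal (((c + ∑ i, α i * q i) ^ (m + k + 1))⁻¹)) =
      ENNReal.ofReal ((k.factorial : ℝ) /
        (((m + k).factorial : ℝ) * c ^ (k + 1) * ∏ i, q i)) := by
  induction m with
  | zero =>
    intro k c q hc _
    have : (k.factorial : ℝ) ≠ 0 := by positivity
    -- The orthant in dimension `0` is the whole one-point space, of mass `1`.
    simp [volume_pi]
    field_simp
  | succ m ih =>
    intro k c q hc hq
    rw [lintegral_orthant_succ _ _ (by fun_prop)]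
    have hP : 0 < ∏ i : Fin m, q i.succ := Finset.prod_pos fun i _ => hq _
    have inner : ∀ x ∈ Ioi (0 : ℝ),
        (∫⁻ β in {β : Fin m → ℝ | ∀ i, 0 < β i}, ENNReal.ofReal
          (((c + ∑ i, (Fin.cons x β : Fin (m + 1) → ℝ) i * q i) ^ (m + 1 + k + 1))⁻¹)) =
        ENNReal.ofReal (((k + 1).factorial : ℝ) /
          (((m + (k + 1)).factorial : ℝ) * ∏ i : Fin m, q i.succ)) *
          ENNReal.ofReal (((c + x * q 0) ^ (k + 2))⁻¹) := by
      intro x hx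
      have hx0 : 0 < x := hx
      have h0 := hq 0
      have := ih (k + 1) (c + x * q 0) (fun i => q i.succ) (by positivity) (fun i => hq _)
      rw [← ENNReal.ofReal_mul (by positivity)]
      simp only [Fin.sum_univ_succ, Fin.cons_zero, Fin.cons_succ, ← add_assoc] at this ⊢
      rw [show m + 1 + k + 1 = m + k + 1 + 1 by ring, this]
      congr 1
      field_simp
    rw [setLIntegral_congr_fun measurableSet_Ioi inner, lintegral_const_mul _ (by fun_prop),
      lintegral_Ioi_affine_pow c (q 0) hc (hq 0) k, ← ENNReal.ofReal_mul (by positivity)]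
    congr 1
    have h0 := hq 0
    rw [Fin.prod_univ_succ, Nat.factorial_succ k, show m + 1 + k = m + (k + 1) by ring]
    push_cast
    field_simp

/-- **Schwinger trick / Feynman parametrization.** For `n = m + 1 ≥ 2` and positive reals
`Q₀, …, Q_m`,
`∫_{(0,∞)^m} (Q₀ + α₁Q₁ + ⋯ + α_mQ_m)^{−n} dα = 1 / ((n−1)! · Q₀ ⋯ Q_m)`. -/
theorem schwinger_trick (m : ℕ) (hm : 1 ≤ m) (Q : Fin (m + 1) → ℝ) (hQ : ∀ i, 0 < Q i) :
    (∫⁻ α in {α : Fin m → ℝ | ∀ i, 0 < α i},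
        ENNReal.ofReal (((Q 0 + ∑ i : Fin m, α i * Q i.succ) ^ (m + 1))⁻¹)) =
      ENNReal.ofReal (1 / ((m.factorial : ℝ) * ∏ i, Q i)) := by
  have h := lintegral_orthant_pow m 0 (Q 0) (fun i => Q i.succ) (hQ 0) (fun i => hQ _)
  simpa [Fin.prod_univ_succ, mul_assoc] using h
end
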